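/- Let W = G(e,e,2) be the dihedral group of order 2e and q = 0. Order the irreducible characters as ε, ρ_1,…,ρ_m, 1 if e = 2m+1, and as ε, ρ_1,…,ρ_{m−1}, ε̂, ε̂', 1 if e = 2m. Then the block lower triangular solution P = (p_{z,z'}) of the matrix equation PΛᵗP = Ω (with diagonal blocks t^e, tI_k, 1 for the similarity classes ℱ_1 = {Λ(α_{0,0})}, ℱ_2 = {Λ(α_{0,j}) : 1 ≤ j ≤ e/2}, ℱ_3 = {Λ(α_0)} of a-values e, 1, 0) is given by: ᵗP_{21} = (t+t^{e−1}, t^2+t^{e−2},…, t^m+t^{m+1}) if e = 2m+1, and ᵗP_{21} = (t+t^{e−1},…, t^{m−1}+t^{m+1}, t^m, t^m) if e = 2m; p_{31} = 1, P_{32} = (1,0,…,0). Moreover λ_{11} = 1, the first row of Λ_{22} equals t^{−1}(t^e−1)·ᵗP_{21}, and λ_{33} = t^{e−2}(t^2−1)(t^e−1). -/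

import Mathlib

/-!
Common framework for formalizing T. Shoji, "Green functions associated to
complex reflection groups, II" (arXiv:math/0105053).

We model:
* `e`-partitions of `n` as functions `ZMod e → Multiset ℕ`;
* the complex reflection group `W̃ = G(e,1,n)` as the semidirect product
  `(Fin n → Multiplicative (ZMod e)) ⋊ Equiv.Perm (Fin n)`, and
  `W = G(e,p,n)` as the kernel of the mod-`p` sum character;
* the tensor space `V^{⊗n}` concretely via matrices indexed by
  `Fin n → (Σ k : ZMod e, Fin (m k))`;
* symmetric functions in the (finitely many, `m k ≥ n`) variables
  `x_i^{(k)}` in evaluated form, i.e. as functions of an assignment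
  `xv : (Σ k : ZMod e, Fin (m k)) → ℂ`.
-/

open scoped BigOperators

attribute [local instance] Classical.propDecidable

namespace GreenII

/-! ## Combinatorics of e-partitions -/

/-- An `e`-partition of `n`: a tuple of partitions (multisets of positive
integers) indexed by `ZMod e`, with total size `n`. -/
def IsEPartition (e : ℕ) [NeZero e] (n : ℕ) (α : ZMod e → Multiset ℕ) : Prop :=
  (∀ k, ∀ x ∈ α k, 0 < x) ∧ (∑ k : ZMod e, (α k).sum) = n

/-- The shift operator `θ = θ_p`, `θ(α)^{(k)} = α^{(k-d)}`. -/
def theta (e : ℕ) [NeZero e] (d : ℕ) (α : ZMod e → Multiset ℕ) : ZMod e → Multiset ℕ :=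
  fun k => α (k - (d : ZMod e))

/-- `c_{α,p}`: the size of the `θ`-orbit of `α`. -/
noncomputable def csize (e : ℕ) [NeZero e] (d : ℕ) (α : ZMod e → Multiset ℕ) : ℕ :=
  Function.minimalPeriod (theta e d) α

/-- `Δ(α) = ∑_k k · l(α^{(k)})`. -/
def Delta (e : ℕ) [NeZero e] (α : ZMod e → Multiset ℕ) : ℕ :=
  ∑ k : ZMod e, k.val * (α k).card

/-- `l(α) = ∑_k l(α^{(k)})`, the total number of parts. -/
def lenE (e : ℕ) [NeZero e] (α : ZMod e → Multiset ℕ) : ℕ :=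
  ∑ k : ZMod e, (α k).card

/-- `α` and `β` lie in the same `θ`-orbit. -/
def SameOrbit (e : ℕ) [NeZero e] (d : ℕ) (α β : ZMod e → Multiset ℕ) : Prop :=
  ∃ i, (theta e d)^[i] α = β

/-! ## The groups `W̃ = G(e,1,n)` and `W = G(e,p,n)` -/

/-- The "diagonal" part of `G(e,1,n)`. -/
abbrev NC (e n : ℕ) := Fin n → Multiplicative (ZMod e)

/-- The permutation action of `𝔖_n` on the diagonal part. -/
def permAut (e n : ℕ) (x : Equiv.Perm (Fin n)) : NC e n ≃* NC e n where
  toFun f := f ∘ ⇑x.symm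
  invFun f := f ∘ ⇑x
  left_inv f := by funext i; simp
  right_inv f := by funext i; simp
  map_mul' f g := rfl

def permHom (e n : ℕ) : Equiv.Perm (Fin n) →* MulAut (NC e n) where
  toFun x := permAut e n x
  map_one' := rfl
  map_mul' x y := rfl

/-- `W̃ = G(e,1,n) ≅ (ℤ/eℤ)^n ⋊ 𝔖_n`, with `w = x(a_1,…,a_n)` recorded as
`⟨(a_i), x⟩`. -/
abbrev Wt (e n : ℕ) := NC e n ⋊[permHom e n] Equiv.Perm (Fin n)

noncomputable instance WtFintype (e n : ℕ) [NeZero e] : Fintype (Wt e n) :=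
  Fintype.ofEquiv (NC e n × Equiv.Perm (Fin n))
    { toFun := fun x => ⟨x.1, x.2⟩
      invFun := fun x => (x.left, x.right)
      left_inv := fun _ => rfl
      right_inv := fun _ => rfl }

/-- The character `w ↦ ∑ a_i mod p` of `W̃`. -/
noncomputable def wsumHom (e p n : ℕ) (hp : p ∣ e) : Wt e n →* Multiplicative (ZMod p) where
  toFun w := Multiplicative.ofAdd (∑ i, ZMod.castHom hp (ZMod p) (w.left i).toAdd)
  map_one' := by simp
  map_mul' w w' := by
    have h : ∀ i, ((w * w').left i).toAdd
        = (w.left i).toAdd + (w'.left (w.right.symm i)).toAdd := fun _ => rfl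
    simp only [h, map_add, Finset.sum_add_distrib, ofAdd_add]
    congr 2
    exact Equiv.sum_comp w.right.symm
      (fun i => ZMod.castHom hp (ZMod p) ((w'.left i).toAdd))

/-- `W = G(e,p,n)`: the subgroup of `W̃` on which `∑ a_i ≡ 0 (mod p)`. -/
noncomputable def Wgrp (e p n : ℕ) (hp : p ∣ e) : Subgroup (Wt e n) :=
  (wsumHom e p n hp).ker

/-- `σ = t_1 ∈ W̃`. -/
def sigmaElt (e n : ℕ) [NeZero n] : Wt e n :=
  SemidirectProduct.inl (fun i => Multiplicative.ofAdd (if i = (0 : Fin n) then (1 : ZMod e) else 0))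

/-- membership in the coset `σ^q W`. -/
def inCoset (e p n : ℕ) [NeZero n] (hp : p ∣ e) (q : ℕ) (w : Wt e n) : Prop :=
  ∃ u ∈ Wgrp e p n hp, w = (sigmaElt e n) ^ q * u

/-- conjugacy under `W`. -/
def IsConjW (e p n : ℕ) (hp : p ∣ e) (w w' : Wt e n) : Prop :=
  ∃ u ∈ Wgrp e p n hp, u * w * u⁻¹ = w'

/-- The `e`-partition recording the conjugacy class of `w ∈ W̃`:
a `k`-cycle of length `l` (a cycle of the underlying permutation whose
accumulated `ZMod e`-color is `k`, fixed points counting as `1`-cycles)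
contributes a part `l` to the `k`-th component. -/
noncomputable def classOf (e n : ℕ) [NeZero e] (w : Wt e n) : ZMod e → Multiset ℕ := fun k =>
  ((w.right.cycleFactorsFinset.val.filter
      (fun c => (∑ i ∈ c.support, (w.left i).toAdd) = k)).map fun c => c.support.card)
    + Multiset.replicate
        ((Finset.univ.filter fun i : Fin n => w.right i = i ∧ (w.left i).toAdd = k).card) 1

/-! ### The standard class representative `w_α(b)` -/

/-- The list of (part, color) pairs of an `e`-partition. -/
noncomputable def partsList (e : ℕ) [NeZero e] (α : ZMod e → Multiset ℕ) : List (ℕ × ZMod e) :=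
  (Finset.univ : Finset (ZMod e)).toList.flatMap fun k => (α k).toList.map fun r => (r, k)

/-- the color datum of `w_α(b)`: each cycle carries its color at its first
point, except the first (exceptional) cycle, which carries `k - b` at its
first point and `b` at its last point. -/
noncomputable def aexc (e : ℕ) [NeZero e] (L : List (ℕ × ZMod e)) (b : ZMod e) :
    (Σ i : Fin L.length, Fin (L.get i).1) → ZMod e := fun x =>
  if (x.1 : ℕ) = 0 then
    (if (x.2 : ℕ) = 0 then (L.get x.1).2 - b else 0)
      + (if (x.2 : ℕ) = (L.get x.1).1 - 1 then b else 0)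
  else if (x.2 : ℕ) = 0 then (L.get x.1).2 else 0

/-- The standard representative `w_α(b) ∈ W̃` of the paper, 2.6: a product of
disjoint cycles matching `α`, of the form `t_{i_1}^k z` except for one
exceptional cycle `t_{i_1}^{k-b} t_{i_m}^{b} z`. -/
noncomputable def wrep (e n : ℕ) [NeZero e] (α : ZMod e → Multiset ℕ) (b : ZMod e) : Wt e n :=
  if hcard : Fintype.card (Σ i : Fin (partsList e α).length, Fin ((partsList e α).get i).1) = n then
    let φ := Fintype.equivFinOfCardEq hcard
    ⟨fun t => Multiplicative.ofAdd (aexc e (partsList e α) b (φ.symm t)),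
      φ.symm.trans ((Equiv.sigmaCongrRight fun _ => finRotate _).trans φ)⟩
  else 1

/-! ## The tensor space `V^{⊗n}` -/

/-- Basis index of `V = ⊕_k V_k`, `dim V_k = m k`. -/
abbrev BIdx (e : ℕ) [NeZero e] (m : ZMod e → ℕ) := Σ k : ZMod e, Fin (m k)

/-- Basis index of `V^{⊗n}`. -/
abbrev TIdx (e n : ℕ) [NeZero e] (m : ZMod e → ℕ) := Fin n → BIdx e m

/-- `ζ` raised to a `ZMod e` exponent. -/
noncomputable def zmpow (e : ℕ) [NeZero e] (ζ : ℂ) (c : ZMod e) : ℂ := ζ ^ c.val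

/-- the matrix of `w ∈ W̃` on `V^{⊗n}` (𝔖_n permutes the factors, and
`t_k` multiplies by `ζ^j` if the `k`-th factor lies in `V_j`). -/
noncomputable def rhoMat (e n : ℕ) [NeZero e] (ζ : ℂ) (m : ZMod e → ℕ) (w : Wt e n) :
    Matrix (TIdx e n m) (TIdx e n m) ℂ := fun b' b =>
  if b' = b ∘ ⇑w.right.symm then ∏ s, ζ ^ (((w.left s).toAdd.val) * (b' s).1.val) else 0

/-- The operator `D` (multiplication by `x_{i_1} ⋯ x_{i_n}`), with the
variables evaluated via `xv`. -/
noncomputable def Dmat (e n : ℕ) [NeZero e] (m : ZMod e → ℕ) (xv : BIdx e m → ℂ) :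
    Matrix (TIdx e n m) (TIdx e n m) ℂ :=
  Matrix.diagonal fun b => ∏ s, xv (b s)

/-- `τ` on the basis of `V`: `v_j^{(k)} ↦ v_j^{(k+d)}` (uses `m (k+d) = m k`). -/
def tauB (e : ℕ) [NeZero e] (d : ℕ) (m : ZMod e → ℕ) (hm : ∀ k, m (k + (d : ZMod e)) = m k) :
    BIdx e m → BIdx e m := fun b => ⟨b.1 + (d : ZMod e), Fin.cast (hm b.1).symm b.2⟩

/-- `g ↦ g^{⊗ n}`: the matrix of `g ∈ End V` acting diagonally on `V^{⊗n}`. -/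
noncomputable def tensorPow (e n : ℕ) [NeZero e] (m : ZMod e → ℕ)
    (g : Matrix (BIdx e m) (BIdx e m) ℂ) : Matrix (TIdx e n m) (TIdx e n m) ℂ :=
  Matrix.of fun b' b => ∏ s, g (b' s) (b s)

/-- the matrix of `τ` on `V`. -/
noncomputable def tauV (e : ℕ) [NeZero e] (d : ℕ) (m : ZMod e → ℕ)
    (hm : ∀ k, m (k + (d : ZMod e)) = m k) : Matrix (BIdx e m) (BIdx e m) ℂ :=
  fun b' b => if b' = tauB e d m hm b then 1 else 0

/-- the matrix of `τ` on `V^{⊗n}`. -/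
noncomputable def tauMat (e n : ℕ) [NeZero e] (d : ℕ) (m : ZMod e → ℕ)
    (hm : ∀ k, m (k + (d : ZMod e)) = m k) : Matrix (TIdx e n m) (TIdx e n m) ℂ :=
  tensorPow e n m (tauV e d m hm)

/-- a member of `G = GL_{m_0} × ⋯ × GL_{m_{e-1}}` (as an endomorphism of V,
invertibility stated separately). -/
def IsBlockDiag (e : ℕ) [NeZero e] (m : ZMod e → ℕ) (g : Matrix (BIdx e m) (BIdx e m) ℂ) : Prop :=
  ∀ b b' : BIdx e m, b.1 ≠ b'.1 → g b b' = 0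

/-- a block upper unitriangular matrix (product of root subgroups for the
positive roots of `G`). -/
def IsUpperUni (e : ℕ) [NeZero e] (m : ZMod e → ℕ) (g : Matrix (BIdx e m) (BIdx e m) ℂ) : Prop :=
  (∀ b, g b b = 1) ∧
    ∀ b b' : BIdx e m, b ≠ b' → ¬(b.1 = b'.1 ∧ b.2.val < b'.2.val) → g b b' = 0

/-! ## Symmetric functions (evaluated form) -/

/-- value of the variable `x_i^{(k)}` under the assignment `xv` (junk `0` out
of range). -/
noncomputable def xval (e : ℕ) [NeZero e] (m : ZMod e → ℕ) (xv : BIdx e m → ℂ)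
    (k : ZMod e) (i : ℕ) : ℂ :=
  if h : i < m k then xv ⟨k, ⟨i, h⟩⟩ else 0

/-- `h_j`: the order of the image of `j` in `ℤ/pℤ`. -/
noncomputable def hOrd (p j : ℕ) : ℕ := addOrderOf ((j : ZMod p))

/-- `j₁ d` where `j₁ = p / h_j`: the number of components of the variable
system `𝒳_j`. -/
noncomputable def Esys (p d j : ℕ) : ℕ := (p / hOrd p j) * d

/-- the variable `X_i^{(k)} = x_i^{(k)} x_i^{(k+jd)} ⋯ x_i^{(k+(h_j-1)jd)}`
of the system `𝒳_j`. -/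
noncomputable def Xvar (e : ℕ) [NeZero e] (p d : ℕ) (m : ZMod e → ℕ) (xv : BIdx e m → ℂ)
    (j k i : ℕ) : ℂ :=
  ∏ s ∈ Finset.range (hOrd p j), xval e m xv (((k + s * j * d : ℕ) : ZMod e)) i

/-- number of variables in the `k`-th component of any of the systems `𝒳_j`. -/
noncomputable def mmX (e : ℕ) [NeZero e] (m : ZMod e → ℕ) : ℕ → ℕ := fun k => m ((k : ℕ) : ZMod e)

/-- The variables of the system `𝒳_j`, as a doubly indexed family. -/
noncomputable def vvX (e : ℕ) [NeZero e] (p d : ℕ) (m : ZMod e → ℕ) (xv : BIdx e m → ℂ)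
    (j : ℕ) : ℕ → ℕ → ℂ := fun k i => Xvar e p d m xv j k i

/-- complete homogeneous symmetric polynomial `h_r` in `N` variables. -/
noncomputable def hcomp (N r : ℕ) (v : ℕ → ℂ) : ℂ :=
  ∑ c ∈ Finset.Nat.antidiagonalTuple N r, ∏ i : Fin N, v i ^ c i

/-- the parts of a partition in decreasing order (`0` beyond the length). -/
noncomputable def lamOf (μ : Multiset ℕ) (i : ℕ) : ℕ := ((μ.sort (· ≤ ·)).reverse).getD i 0

/-- Schur polynomial in `N` variables (Jacobi–Trudi). -/
noncomputable def schurFin (N : ℕ) (μ : Multiset ℕ) (v : ℕ → ℂ) : ℂ :=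
  Matrix.det (Matrix.of fun i j : Fin N =>
    if h : (0 : ℤ) ≤ (lamOf μ i + j : ℤ) - i then hcomp N ((lamOf μ i + j : ℤ) - i).toNat v
    else 0)

/-- monomial symmetric polynomial in `N` variables. -/
noncomputable def monoFin (N : ℕ) (μ : Multiset ℕ) (v : ℕ → ℂ) : ℂ :=
  ∑ c ∈ (Finset.Nat.antidiagonalTuple N μ.sum).filter
      (fun c => ((List.ofFn c : List ℕ) : Multiset ℕ).filter (fun x => 0 < x) = μ),
    ∏ i : Fin N, v i ^ c i

/-! ### generic families for a variable system with `E` components -/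

/-- `p_r^{(i)} = ∑_{k<E} u^{ik} p_r(x^{(k)})` (formula (2.2.2)/(2.4.2), with
`u` a primitive `E`-th root of unity), for the system of variables
`vv k i` (`k < E`, `i < mm k`); `p_0^{(i)} = 1`. -/
noncomputable def pGenSys (u : ℂ) (E : ℕ) (mm : ℕ → ℕ) (vv : ℕ → ℕ → ℂ) (i r : ℕ) : ℂ :=
  if r = 0 then 1 else ∑ k ∈ Finset.range E, u ^ (i * k) * ∑ s ∈ Finset.range (mm k), vv k s ^ r

/-- the power sum `p_γ` of an `E`-tuple of partitions (2.2.1). -/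
noncomputable def pAlphaSys (u : ℂ) (E : ℕ) (mm : ℕ → ℕ) (vv : ℕ → ℕ → ℂ)
    (γ : ℕ → Multiset ℕ) : ℂ :=
  ∏ k ∈ Finset.range E, ((γ k).map fun r => pGenSys u E mm vv k r).prod

/-- the Schur function `s_γ` of an `E`-tuple of partitions. -/
noncomputable def sAlphaSys (E : ℕ) (mm : ℕ → ℕ) (vv : ℕ → ℕ → ℂ) (γ : ℕ → Multiset ℕ) : ℂ :=
  ∏ k ∈ Finset.range E, schurFin (mm k) (γ k) (vv k)

/-- the monomial symmetric function `m_γ` of an `E`-tuple of partitions. -/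
noncomputable def mAlphaSys (E : ℕ) (mm : ℕ → ℕ) (vv : ℕ → ℕ → ℂ) (γ : ℕ → Multiset ℕ) : ℂ :=
  ∏ k ∈ Finset.range E, monoFin (mm k) (γ k) (vv k)

/-- the function `q_{r,±}^{(k)}(x;t)` of [S], (3.1.1). -/
noncomputable def qGenSys (t : ℂ) (E : ℕ) (mm : ℕ → ℕ) (vv : ℕ → ℕ → ℂ)
    (sgn : Bool) (k r : ℕ) : ℂ :=
  if r = 0 then 1 else
    let k' := if sgn then (k + 1) % E else (k + E - 1) % E
    ∑ i ∈ Finset.range (mm k),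
      vv k i ^ ((r : ℤ) + (mm k : ℤ) - 1 - (mm k' : ℤ)) *
        (∏ jj ∈ Finset.range (mm k'), (vv k i - t * vv k' jj)) /
        ∏ jj ∈ (Finset.range (mm k)).erase i, (vv k i - vv k jj)

/-- the function `q_{γ,±}(x;t)` of [S], (3.1.2). -/
noncomputable def qAlphaSys (t : ℂ) (E : ℕ) (mm : ℕ → ℕ) (vv : ℕ → ℕ → ℂ)
    (sgn : Bool) (γ : ℕ → Multiset ℕ) : ℂ :=
  ∏ k ∈ Finset.range E, ((γ k).map fun r => qGenSys t E mm vv sgn k r).prod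

/-- `z_β = ∏ i^{n_i} n_i!` for a partition `β = (1^{n_1} 2^{n_2} ⋯)`. -/
noncomputable def zPart (μ : Multiset ℕ) : ℂ :=
  ∏ i ∈ μ.toFinset, (i : ℂ) ^ (μ.count i) * (Nat.factorial (μ.count i) : ℂ)

/-- `z_γ(t) = z_γ ∏_{k,j} (1 - u^k t^{γ_j^{(k)}})⁻¹` for an `E`-tuple of
partitions `γ` (`u` the `E`-th root of unity), cf. (3.1.3). -/
noncomputable def zClassSys (u t : ℂ) (E : ℕ) (γ : ℕ → Multiset ℕ) : ℂ :=
  ((E : ℂ) ^ (∑ k ∈ Finset.range E, (γ k).card)) * (∏ k ∈ Finset.range E, zPart (γ k)) *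
    (∏ k ∈ Finset.range E, ((γ k).map fun r => (1 - u ^ k * t ^ r)).prod)⁻¹

/-! ### the `j`-th pieces attached to an e-partition -/

/-- the truncation `α{j} = (α^{(0)},…,α^{(j₁d-1)})` (used when `c_{α,p} ∣ j`). -/
noncomputable def braceF (e : ℕ) [NeZero e] (p d : ℕ) (j : ℕ) (α : ZMod e → Multiset ℕ) :
    ℕ → Multiset ℕ :=
  fun k => if k < Esys p d j then α ((k : ℕ) : ZMod e) else 0

/-- the `j₁d`-partition `α[j]` of `n/h` (condition (2.6.1)): component `k/h`
has parts `α_i^{(k)}/h`. -/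
noncomputable def bracketF (e : ℕ) [NeZero e] (p d : ℕ) (j : ℕ) (α : ZMod e → Multiset ℕ) :
    ℕ → Multiset ℕ :=
  fun k' => if k' < Esys p d j then (α (((hOrd p j * k' : ℕ) : ZMod e))).map (fun r => r / hOrd p j)
  else 0

/-- condition (2.6.1): `h_j` divides all parts `α_i^{(k)}`, and `h_j ∣ k`
whenever `α^{(k)} ≠ ∅`. -/
def Cond261 (e : ℕ) [NeZero e] (p j : ℕ) (α : ZMod e → Multiset ℕ) : Prop :=
  (∀ k, ∀ r ∈ α k, hOrd p j ∣ r) ∧ ∀ k : ZMod e, α k ≠ 0 → hOrd p j ∣ k.val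

/-- `s_{α{j}}(𝒳_j)`. -/
noncomputable def schurBrace (e : ℕ) [NeZero e] (p d : ℕ) (m : ZMod e → ℕ) (xv : BIdx e m → ℂ)
    (j : ℕ) (α : ZMod e → Multiset ℕ) : ℂ :=
  sAlphaSys (Esys p d j) (mmX e m) (vvX e p d m xv j) (braceF e p d j α)

/-- `p_{α[j]}(𝒳_j)` (2.6; the root of unity for the system `𝒳_j` is `ζ^h`). -/
noncomputable def pBracket (e : ℕ) [NeZero e] (p d : ℕ) (ζ : ℂ) (m : ZMod e → ℕ)
    (xv : BIdx e m → ℂ) (j : ℕ) (α : ZMod e → Multiset ℕ) : ℂ :=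
  pAlphaSys (ζ ^ hOrd p j) (Esys p d j) (mmX e m) (vvX e p d m xv j) (bracketF e p d j α)

/-- `l(α[j])`. -/
noncomputable def lenBracket (e : ℕ) [NeZero e] (p d : ℕ) (j : ℕ)
    (α : ZMod e → Multiset ℕ) : ℕ :=
  ∑ k ∈ Finset.range (Esys p d j), (bracketF e p d j α k).card

/-! ### Schur functions and power sums for `σ^q W` (2.10) -/

/-- the `j`-th component `s^j_{α,φ}` of the Schur function `𝐬_{α,φ}` for
`σ^q W` (2.10.1); the character `φ = φ_r` of `Γ_α = ⟨τ^c⟩ ≅ ℤ/(p/c)ℤ` is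
encoded by `r`, via `φ_r(τ^j) = ζ^{drj}` for `c ∣ j`. -/
noncomputable def sTuple (e : ℕ) [NeZero e] (p d q : ℕ) (ζ : ℂ) (m : ZMod e → ℕ)
    (xv : BIdx e m → ℂ) (α : ZMod e → Multiset ℕ) (r : ℕ) (j : ℕ) : ℂ :=
  if csize e d α ∣ j then
    ζ ^ (d * r * j) *
      ∑ i ∈ Finset.range (csize e d α),
        ζ ^ (q * i * d) * schurBrace e p d m xv j ((theta e d)^[i] α)
  else 0

/-- the `j`-th component `p^j_{β,b}` of the power sum `𝐩_{β,b}` for `σ^q W`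
(2.10.2). -/
noncomputable def pTuple (e : ℕ) [NeZero e] (p d : ℕ) (ζ : ℂ) (m : ZMod e → ℕ)
    (xv : BIdx e m → ℂ) (β : ZMod e → Multiset ℕ) (b : ZMod e) (j : ℕ) : ℂ :=
  if Cond261 e p j β then
    (hOrd p j : ℂ) ^ (lenBracket e p d j β) *
      zmpow e ζ (-(((Delta e β : ZMod e) + b) * ((j * d : ℕ) : ZMod e))) *
      pBracket e p d ζ m xv j β
  else 0

/-! ## The model for (extensions of) the irreducible characters of `W` -/

/-- trace of `f` on a subspace (junk `0` if not invariant). -/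
noncomputable def traceOn {V : Type*} [AddCommGroup V] [Module ℂ V]
    (S : Submodule ℂ V) (f : V →ₗ[ℂ] V) : ℂ :=
  if h : ∀ v ∈ S, f v ∈ S then LinearMap.trace ℂ S (f.restrict h) else 0

/-- the scalar by which the torus element `diag dv ∈ G` acts on a highest
weight vector of weight `α`. -/
noncomputable def weightOf (e : ℕ) [NeZero e] (m : ZMod e → ℕ) (α : ZMod e → Multiset ℕ)
    (dv : BIdx e m → ℂ) : ℂ :=
  ∏ b : BIdx e m, dv b ^ (lamOf (α b.1) b.2.val)

/-- the space of highest weight vectors of weight `α` in `V^{⊗n}`: the model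
for the irreducible `W̃`-module `Z_α` (1.3.1, 1.4). -/
noncomputable def hwSubmodule (e n : ℕ) [NeZero e] (m : ZMod e → ℕ)
    (α : ZMod e → Multiset ℕ) : Submodule ℂ (TIdx e n m → ℂ) :=
  (⨅ g ∈ {g | IsUpperUni e m g},
      Module.End.eigenspace (Matrix.mulVecLin (tensorPow e n m g)) 1) ⊓
    ⨅ dv : BIdx e m → ℂ,
      Module.End.eigenspace (Matrix.mulVecLin (tensorPow e n m (Matrix.diagonal dv)))
        (weightOf e m α dv)

/-- the model for the irreducible `W`-module `Z_{α,φ_r}`: the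
`φ_r(τ^c)`-eigenspace of `τ^c` on `Z_α`, where `c = c_{α,p}` and
`φ_r(τ^c) = ζ^{cdr}`. -/
noncomputable def ZSub (e n : ℕ) [NeZero e] (d : ℕ) (m : ZMod e → ℕ)
    (hm : ∀ k, m (k + (d : ZMod e)) = m k) (ζ : ℂ) (α : ZMod e → Multiset ℕ) (r : ℕ) :
    Submodule ℂ (TIdx e n m → ℂ) :=
  hwSubmodule e n m α ⊓
    Module.End.eigenspace (Matrix.mulVecLin ((tauMat e n d m hm) ^ (csize e d α)))
      (ζ ^ (csize e d α * d * r))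

/-- The model for the irreducible character `χ^{α,φ_r}` of `W` and for its
chosen extension `χ̃^{α,φ_r}` to `⟨σ^q⟩ ⋉ W`: the trace of `w` on the model
`Z_{α,φ_r} ⊆ V^{⊗n}`. -/
noncomputable def charExt (e n : ℕ) [NeZero e] (d : ℕ) (m : ZMod e → ℕ)
    (hm : ∀ k, m (k + (d : ZMod e)) = m k) (ζ : ℂ) (α : ZMod e → Multiset ℕ) (r : ℕ)
    (w : Wt e n) : ℂ :=
  traceOn (ZSub e n d m hm ζ α r) (Matrix.mulVecLin (rhoMat e n ζ m w))

/-! ## symbols, a-function, similarity; the reflection representation -/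

/-- the multiset of entries of the symbol `Λ(α) = α + Λ⁰` of type `(r,0)`. -/
noncomputable def entriesSym (e : ℕ) [NeZero e] (m : ZMod e → ℕ) (rsym : ℕ)
    (α : ZMod e → Multiset ℕ) : Multiset ℕ :=
  (Finset.univ : Finset (BIdx e m)).val.map fun b =>
    lamOf (α b.1) b.2.val + rsym * (m b.1 - 1 - b.2.val)

noncomputable def pairMinSum (M : Multiset ℕ) : ℕ :=
  (M.bind fun a => M.map fun b => min a b).sum

/-- the `a`-function (3.5.2) on symbols of type `(rsym, 0)`. -/
noncomputable def aVal (e : ℕ) [NeZero e] (m : ZMod e → ℕ) (rsym : ℕ)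
    (α : ZMod e → Multiset ℕ) : ℕ :=
  pairMinSum (entriesSym e m rsym α) - pairMinSum (entriesSym e m rsym (fun _ => 0))

/-- similarity of symbols: equality of entries with multiplicities. -/
def SimSym (e : ℕ) [NeZero e] (m : ZMod e → ℕ) (rsym : ℕ) (α β : ZMod e → Multiset ℕ) : Prop :=
  entriesSym e m rsym α = entriesSym e m rsym β

/-- the reflection representation `M = ℂ^n` of `W̃` (`w(e_i) = ζ^{a_i} e_{x(i)}`). -/
noncomputable def refMat (e n : ℕ) [NeZero e] (ζ : ℂ) (w : Wt e n) :
    Matrix (Fin n) (Fin n) ℂ :=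
  fun i' i => if i' = w.right i then zmpow e ζ (w.left i').toAdd else 0

/-- The functional `R_q(f)` of (4.2.1), for a function `f` on the coset `σ^q W`. -/
noncomputable def Rq (e p d n : ℕ) [NeZero e] [NeZero n] (hp : p ∣ e) (ζ t : ℂ) (q : ℕ)
    (f : Wt e n → ℂ) : ℂ :=
  (ζ ^ (q * d) * t ^ (d * n) - 1) * (∏ i ∈ Finset.Icc 1 (n - 1), (t ^ (e * i) - 1)) *
    (Nat.card (Wgrp e p n hp) : ℂ)⁻¹ *
    ∑ w ∈ Finset.univ.filter (fun w => inCoset e p n hp q w),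
      (refMat e n ζ w).det * f w / (t • (1 : Matrix (Fin n) (Fin n) ℂ) - refMat e n ζ w).det

/-- `N^*`: the number of reflections in `W`. -/
noncomputable def Nstar (e p n : ℕ) [NeZero e] (hp : p ∣ e) (ζ : ℂ) : ℕ :=
  Nat.card {w : Wt e n // w ∈ Wgrp e p n hp ∧ w ≠ 1 ∧ (refMat e n ζ w - 1).rank = 1}

end GreenII
namespace GreenII

/-- the number of "middle" indices for `G(e,e,2)`:
`k = (e-1)/2` (`e` odd), `k = e/2 + 1` (`e` even). -/
def dihedralK (e : ℕ) : ℕ := if Even e then e / 2 + 1 else (e - 1) / 2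

/-- the parametrization of `𝒫̃_W^0` for `W = G(e,e,2)` in the order
`ε, ρ_1, …, (ρ_m | ρ_{m-1}, ε̂, ε̂'), 1`:
`0 ↦ α_{0,0} = (1²;-;…)`, `i ↦ α_{0,i}` (with, for even `e`, the two
characters `φ = ±1` of `Γ_{α_{0,e/2}}` at `i = e/2, e/2+1`), and the last
index `↦ α_0 = (2;-;…)`. -/
noncomputable def dihedralIdx (e : ℕ) [NeZero e] (i : ℕ) : (ZMod e → Multiset ℕ) × ℕ :=
  if i = 0 then (fun kk => if kk = 0 then ({1, 1} : Multiset ℕ) else 0, 0)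
  else if i = dihedralK e + 1 then (fun kk => if kk = 0 then ({2} : Multiset ℕ) else 0, 0)
  else if Even e ∧ i = e / 2 + 1 then
    (fun kk => if kk = 0 ∨ kk = ((e / 2 : ℕ) : ZMod e) then ({1} : Multiset ℕ) else 0, 1)
  else (fun kk => if kk = 0 ∨ kk = ((min i (e / 2) : ℕ) : ZMod e) then ({1} : Multiset ℕ)
    else 0, 0)

/-- similarity class: `0` for `ℱ_1 = {Λ(α_{0,0})}` (a-value `e`), `1` for
`ℱ_2 = {Λ(α_{0,j})}` (a-value `1`), `2` for `ℱ_3 = {Λ(α_0)}` (a-value `0`). -/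
def dihedralClass (e i : ℕ) : ℕ :=
  if i = 0 then 0 else if i = dihedralK e + 1 then 2 else 1

/-!
The characters of the dihedral group are computed from the tensor-space model: on the rotation
with eigenvalues `x`, `x⁻¹` each of them is a multiple of `xⁿ + x⁻ⁿ`, and on the reflections it
vanishes or is a sign times `xⁿ`. Expanding `(t² - 1)(tᵉ - 1) / ((t - x)(t - x⁻¹))` as a
polynomial in `x⁻¹` modulo `xᵉ = 1` turns `R_0` into combinations of the fake degrees
`F(n) = tⁿ + tᵉ⁻ⁿ`. The block equation then gives the first column of `P` at once, and the identity
`tᵉ (F(a + b) + F(b - a)) - F(a) F(b) = (tᵉ - 1) tᵃ F(b)` for `a ≤ b ≤ e / 2` shows that `Λ₂₂` is,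
up to the factor `t⁻² (tᵉ - 1)` and a term from the reflections, the matrix of entries
`t ^ min(a, b) F(max(a, b))`. Such a Green matrix is nonsingular since `F(a) / tᵃ` takes distinct
values at consecutive `a`, so the equation for the last row of `P` has `(1, 0, …, 0)` as its only
solution.
-/

section TraceOnSpan

variable {V : Type*} [AddCommGroup V] [Module ℂ V] {f : V →ₗ[ℂ] V}

lemma traceOn_span_range {ι : Type*} [Fintype ι] {b : ι → V} (hb : LinearIndependent ℂ b)
    {A : Matrix ι ι ℂ} (hA : ∀ j, f (b j) = ∑ i, A i j • b i) :
    traceOn (Submodule.span ℂ (Set.range b)) f = A.trace := by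
  have hinv : ∀ v ∈ Submodule.span ℂ (Set.range b), f v ∈ Submodule.span ℂ (Set.range b) := by
    refine fun v hv => Submodule.span_le (p := (Submodule.span ℂ (Set.range b)).comap f) |>.2 ?_ hv
    rintro _ ⟨j, rfl⟩
    simp only [Submodule.comap_coe, Set.mem_preimage, SetLike.mem_coe, hA]
    exact Submodule.sum_smul_mem _ _ fun i _ => Submodule.subset_span ⟨i, rfl⟩
  let B := Module.Basis.span hb
  have hB : ∀ j, (B j : V) = b j := fun j => congrArg Subtype.val (Module.Basis.span_apply hb j)
  have hmat : LinearMap.toMatrix B B (f.restrict hinv) = A := by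
    ext i j
    have hf : f.restrict hinv (B j) = ∑ i, A i j • B i := by
      ext
      simp [hB, hA]
    rw [LinearMap.toMatrix_apply, hf, B.repr_sum_self]
  rw [traceOn, dif_pos hinv, LinearMap.trace_eq_matrix_trace ℂ B, hmat]

lemma traceOn_span_singleton {v : V} (hv : v ≠ 0) {c : ℂ} (hf : f v = c • v) :
    traceOn (Submodule.span ℂ {v}) f = c := by
  have h := traceOn_span_range (f := f) (b := fun _ : Unit => v)
    (linearIndependent_unique_iff.2 hv) (A := Matrix.of fun _ _ => c) (by simpa using hf)
  simpa [Matrix.trace] using h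

lemma traceOn_span_pair {v w : V} (hvw : LinearIndependent ℂ ![v, w]) {a b c d : ℂ}
    (hv : f v = a • v + c • w) (hw : f w = b • v + d • w) :
    traceOn (Submodule.span ℂ {v, w}) f = a + d := by
  have h := traceOn_span_range (f := f) hvw (A := !![a, b; c, d])
    (by simp [Fin.forall_fin_two, Fin.sum_univ_two, hv, hw])
  rwa [Matrix.trace_fin_two_of, Matrix.range_cons_cons_empty] at h

lemma span_pair_inf_eigenspace_of_swap {v w : V} (hv : f v = w) (hw : f w = v) {ε : ℂ}
    (hε : ε * ε = 1) :
    Submodule.span ℂ {v, w} ⊓ Module.End.eigenspace f ε = Submodule.span ℂ {v + ε • w} := by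
  apply le_antisymm
  · rintro u ⟨hu, hfu⟩
    obtain ⟨x, y, rfl⟩ := Submodule.mem_span_pair.1 hu
    rw [SetLike.mem_coe, Module.End.mem_eigenspace_iff, map_add, map_smul, map_smul, hv, hw] at hfu
    have hfix : x • v + y • w = (2⁻¹ * (x + ε * y)) • (v + ε • w) := by
      linear_combination (norm := module) (-(ε / 2)) • hfu - hε • ((x / 2) • v + y • w)
    rw [hfix]
    exact Submodule.smul_mem _ _ (Submodule.mem_span_singleton_self _)
  · rw [Submodule.span_singleton_le_iff_mem]
    refine ⟨Submodule.mem_span_pair.2 ⟨1, ε, by simp⟩, ?_⟩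
    rw [SetLike.mem_coe, Module.End.mem_eigenspace_iff, map_add, map_smul, hv, hw, smul_add,
      smul_smul, hε, one_smul, add_comm]

end TraceOnSpan

section TensorBasis

open Matrix

variable {e n : ℕ} [NeZero e] {m : ZMod e → ℕ}

lemma bidx_ext {b b' : BIdx e m} (h₁ : b.1 = b'.1) (h₂ : b.2.val = b'.2.val) : b = b' := by
  obtain ⟨k, j⟩ := b
  obtain ⟨k', j'⟩ := b'
  obtain rfl : k = k' := h₁
  exact congrArg _ (Fin.ext h₂)

lemma bidx_eq_iff {b b' : BIdx e m} : b = b' ↔ b.1 = b'.1 ∧ b.2.val = b'.2.val :=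
  ⟨by rintro rfl; exact ⟨rfl, rfl⟩, fun h => bidx_ext h.1 h.2⟩

lemma tensorPow_mulVec_single (g : Matrix (BIdx e m) (BIdx e m) ℂ) (b : TIdx e n m) :
    tensorPow e n m g *ᵥ Pi.single b 1 = fun b' => ∏ s, g (b' s) (b s) := by
  rw [mulVec_single_one]
  rfl

lemma tensorPow_diagonal (dv : BIdx e m → ℂ) :
    tensorPow e n m (diagonal dv) = diagonal fun b => ∏ s, dv (b s) := by
  ext b b'
  rcases eq_or_ne b b' with rfl | hne
  · simp [tensorPow]
  · obtain ⟨s, hs⟩ := Function.ne_iff.1 hne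
    rw [diagonal_apply_ne _ hne]
    exact Finset.prod_eq_zero (Finset.mem_univ s) (diagonal_apply_ne _ hs)

lemma mem_hwSubmodule_iff {α : ZMod e → Multiset ℕ} {v : TIdx e n m → ℂ} :
    v ∈ hwSubmodule e n m α ↔
      (∀ g, IsUpperUni e m g → tensorPow e n m g *ᵥ v = v) ∧
        ∀ dv b, (∏ s, dv (b s)) * v b = weightOf e m α dv * v b := by
  simp only [hwSubmodule, Submodule.mem_inf, Submodule.mem_iInf, Set.mem_ofPred_eq,
    Module.End.mem_eigenspace_iff, mulVecLin_apply, one_smul, tensorPow_diagonal, funext_iff,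
    mulVec_diagonal, Pi.smul_apply, smul_eq_mul]

lemma tauMat_mulVec_single {d : ℕ} (hm : ∀ k, m (k + (d : ZMod e)) = m k) (b : TIdx e n m) :
    tauMat e n d m hm *ᵥ Pi.single b 1 = Pi.single (tauB e d m hm ∘ b) 1 := by
  rw [tauMat, tensorPow_mulVec_single]
  ext b'
  simp only [tauV, Fintype.prod_ite_zero, Finset.prod_const_one, Pi.single_apply, funext_iff,
    Function.comp_apply]

lemma tauMat_pow_mulVec_single {d : ℕ} (hm : ∀ k, m (k + (d : ZMod e)) = m k) (c : ℕ)
    (b : TIdx e n m) :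
    tauMat e n d m hm ^ c *ᵥ Pi.single b 1 = Pi.single ((tauB e d m hm)^[c] ∘ b) 1 := by
  induction c with
  | zero => rw [pow_zero, one_mulVec, Function.iterate_zero, Function.id_comp]
  | succ c ih =>
    rw [pow_succ', ← mulVec_mulVec, ih, tauMat_mulVec_single, Function.iterate_succ',
      Function.comp_assoc]

lemma tauB_iterate_fst {d : ℕ} (hm : ∀ k, m (k + (d : ZMod e)) = m k) (c : ℕ) (b : BIdx e m) :
    ((tauB e d m hm)^[c] b).1 = b.1 + (c * d : ℕ) := by
  induction c with
  | zero => simp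
  | succ c ih =>
    rw [Function.iterate_succ_apply', Nat.succ_mul, Nat.cast_add, ← add_assoc, ← ih]
    rfl

lemma tauB_iterate_snd {d : ℕ} (hm : ∀ k, m (k + (d : ZMod e)) = m k) (c : ℕ) (b : BIdx e m) :
    ((tauB e d m hm)^[c] b).2.val = b.2.val := by
  induction c with
  | zero => rfl
  | succ c ih => rw [Function.iterate_succ_apply', tauB, Fin.val_cast, ih]

lemma tauMat_pow_eq_one {d : ℕ} (hm : ∀ k, m (k + (d : ZMod e)) = m k) {c : ℕ}
    (hc : e ∣ c * d) : tauMat e n d m hm ^ c = 1 := by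
  have hτ : (tauB e d m hm)^[c] = id := funext fun b => bidx_ext
    (by rw [tauB_iterate_fst, (ZMod.natCast_eq_zero_iff _ _).2 hc, add_zero, id])
    (tauB_iterate_snd hm c b)
  refine ext_of_mulVec_single fun b => ?_
  rw [tauMat_pow_mulVec_single, hτ, Function.id_comp, one_mulVec]

lemma rhoMat_mulVec_single (ζ : ℂ) (w : Wt e n) (b : TIdx e n m) :
    rhoMat e n ζ m w *ᵥ Pi.single b 1 =
      (∏ s, ζ ^ ((w.left s).toAdd.val * (b (w.right.symm s)).1.val)) •
        Pi.single (b ∘ w.right.symm) 1 := by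
  rw [mulVec_single_one]
  ext b'
  by_cases h : b' = b ∘ w.right.symm
  · simp [rhoMat, h, col_apply]
  · simp [rhoMat, h, col_apply]

end TensorBasis

section ThetaOrbits

variable {e : ℕ} [NeZero e] {d : ℕ} {α : ZMod e → Multiset ℕ}

lemma theta_iterate_apply (c : ℕ) (k : ZMod e) :
    (theta e d)^[c] α k = α (k - (c * d : ℕ)) := by
  induction c generalizing k with
  | zero => simp
  | succ c ih =>
    rw [Function.iterate_succ_apply', theta, ih]
    congr 1
    push_cast
    ring

lemma csize_dvd {c : ℕ} (h : ∀ k, α (k - (c * d : ℕ)) = α k) : csize e d α ∣ c :=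
  Function.IsPeriodicPt.minimalPeriod_dvd (funext fun k => (theta_iterate_apply c k).trans (h k))

lemma apply_sub_csize (k : ZMod e) : α (k - (csize e d α * d : ℕ)) = α k := by
  rw [← theta_iterate_apply (α := α)]
  exact congrFun (Function.isPeriodicPt_minimalPeriod (theta e d) α) k

lemma dvd_csize_mul (h : ∀ x, (∀ k, α (k - x) = α k) → x = 0) : e ∣ csize e d α * d :=
  (ZMod.natCast_eq_zero_iff _ _).1 (h _ apply_sub_csize)

end ThetaOrbits

lemma ZSub_eq_hwSubmodule {e n : ℕ} [NeZero e] {m : ZMod e → ℕ} {d : ℕ}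
    (hm : ∀ k, m (k + (d : ZMod e)) = m k) {ζ : ℂ} (hζ : ζ ^ e = 1) {α : ZMod e → Multiset ℕ}
    (hα : e ∣ csize e d α * d) (r : ℕ) : ZSub e n d m hm ζ α r = hwSubmodule e n m α := by
  obtain ⟨c, hc⟩ := hα
  have hscalar : ζ ^ (csize e d α * d * r) = 1 := by rw [hc, mul_assoc, pow_mul, hζ, one_pow]
  rw [ZSub, inf_eq_left, tauMat_pow_eq_one hm ⟨c, hc⟩, hscalar]
  exact fun v _ => Module.End.mem_eigenspace_iff.2 (by simp)

section TwoFoldTensors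

open Matrix Submodule

variable {e : ℕ} [NeZero e] {m : ZMod e → ℕ} {p q : BIdx e m} {α : ZMod e → Multiset ℕ}

/-- The elementary tensor `p ⊗ q` of two basis vectors of `V`. -/
noncomputable def elemTensor (p q : BIdx e m) : TIdx e 2 m → ℂ :=
  Pi.single ![p, q] 1

lemma elemTensor_apply (p q : BIdx e m) (b : TIdx e 2 m) :
    elemTensor p q b =
      Pi.single (M := fun _ => ℂ) p 1 (b 0) * Pi.single (M := fun _ => ℂ) q 1 (b 1) := by
  simp only [elemTensor, Pi.single_apply, funext_iff, Fin.forall_fin_two, cons_val_zero,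
    cons_val_one, ite_and, ite_mul, one_mul, zero_mul]

lemma elemTensor_ne_zero (p q : BIdx e m) : elemTensor p q ≠ 0 :=
  Pi.single_ne_zero_iff.2 one_ne_zero

lemma linearIndependent_elemTensor_pair (hpq : p ≠ q) :
    LinearIndependent ℂ ![elemTensor p q, elemTensor q p] := by
  refine LinearIndependent.pair_iff.2 fun x y h => ⟨?_, ?_⟩
  · simpa [elemTensor_apply, hpq] using congrFun h ![p, q]
  · simpa [elemTensor_apply, hpq.symm] using congrFun h ![q, p]

lemma tensorPow_mulVec_elemTensor (g : Matrix (BIdx e m) (BIdx e m) ℂ) (p q : BIdx e m) :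
    tensorPow e 2 m g *ᵥ elemTensor p q = fun b => g (b 0) p * g (b 1) q := by
  rw [elemTensor, tensorPow_mulVec_single]
  simp [Fin.prod_univ_two]

lemma prod_mul_elemTensor (dv : BIdx e m → ℂ) (p q : BIdx e m) (b : TIdx e 2 m) :
    (∏ s, dv (b s)) * elemTensor p q b = dv p * dv q * elemTensor p q b := by
  rcases eq_or_ne b ![p, q] with rfl | hb
  · simp [Fin.prod_univ_two]
  · simp [elemTensor, hb]

lemma tauMat_pow_mulVec_elemTensor {d : ℕ} (hm : ∀ k, m (k + (d : ZMod e)) = m k) (c : ℕ)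
    (p q : BIdx e m) :
    tauMat e 2 d m hm ^ c *ᵥ elemTensor p q =
      elemTensor ((tauB e d m hm)^[c] p) ((tauB e d m hm)^[c] q) := by
  rw [elemTensor, tauMat_pow_mulVec_single, elemTensor]
  congr 1
  ext i : 1
  fin_cases i <;> rfl

lemma eq_pair_of_forall_mul_eq {ι : Type*} {a b p q : ι}
    (h : ∀ f : ι → ℂ, f a * f b = f p * f q) : (a = p ∧ b = q) ∨ (a = q ∧ b = p) := by
  have ha : p = a ∨ q = a := by
    simpa [or_iff_not_imp_right] using h fun x => if x = a then 0 else 1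
  have hb : ∀ x y, (∀ f : ι → ℂ, f x * f b = f x * f y) → b = y := fun x y hxy => by
    by_contra hne
    have hfx : (if x = b then 2 else 1 : ℂ) ≠ 0 := by split_ifs <;> norm_num
    simpa [Ne.symm hne] using mul_left_cancel₀ hfx (hxy fun z => if z = b then 2 else 1)
  rcases ha with rfl | rfl
  · exact .inl ⟨rfl, hb _ _ h⟩
  · exact .inr ⟨rfl, hb _ _ fun f => (h f).trans (mul_comm _ _)⟩

lemma hwSubmodule_le_span_pair (hα : ∀ dv, weightOf e m α dv = dv p * dv q) :
    hwSubmodule e 2 m α ≤ span ℂ {elemTensor p q, elemTensor q p} := by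
  intro v hv
  rw [pi_eq_sum_univ' v]
  refine sum_mem fun b _ => ?_
  rcases eq_or_ne (v b) 0 with hb | hb
  · simp [hb]
  have hweight : ∀ dv : BIdx e m → ℂ, dv (b 0) * dv (b 1) = dv p * dv q := fun dv => by
    rw [← hα]
    exact mul_right_cancel₀ hb (by simpa using (mem_hwSubmodule_iff.1 hv).2 dv b)
  have hb' : b = ![p, q] ∨ b = ![q, p] := by
    simpa [funext_iff, Fin.forall_fin_two] using eq_pair_of_forall_mul_eq hweight
  exact smul_mem _ _ (subset_span (hb'.imp (congrArg (Pi.single · 1)) (congrArg (Pi.single · 1))))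

lemma IsUpperUni.apply_of_val_eq_zero {g : Matrix (BIdx e m) (BIdx e m) ℂ}
    (hg : IsUpperUni e m g) (hp : p.2.val = 0) (b : BIdx e m) :
    g b p = Pi.single (M := fun _ => ℂ) p 1 b := by
  rcases eq_or_ne b p with rfl | hb
  · simp [hg.1]
  · simp [hb, hg.2 b p hb (by simp [hp])]

lemma IsUpperUni.apply_of_val_eq_one {g : Matrix (BIdx e m) (BIdx e m) ℂ}
    (hg : IsUpperUni e m g) (hpq : p.1 = q.1) (hp : p.2.val = 0) (hq : q.2.val = 1)
    (b : BIdx e m) :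
    g b q = Pi.single (M := fun _ => ℂ) q 1 b + g p q * Pi.single (M := fun _ => ℂ) p 1 b := by
  rcases eq_or_ne b q with rfl | hbq
  · have hbp : b ≠ p := by rintro rfl; omega
    simp [hg.1, hbp]
  rcases eq_or_ne b p with rfl | hbp
  · simp [hbq]
  · have hb : ¬(b.1 = q.1 ∧ b.2.val < q.2.val) := fun h =>
      hbp (bidx_ext (h.1.trans hpq.symm) (by omega))
    simp [hbq, hbp, hg.2 b q hbq hb]

lemma hwSubmodule_eq_span_pair (hα : ∀ dv, weightOf e m α dv = dv p * dv q)
    (hp : p.2.val = 0) (hq : q.2.val = 0) :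
    hwSubmodule e 2 m α = span ℂ {elemTensor p q, elemTensor q p} := by
  have hmem : ∀ {p q : BIdx e m}, p.2.val = 0 → q.2.val = 0 →
      (∀ dv, weightOf e m α dv = dv p * dv q) → elemTensor p q ∈ hwSubmodule e 2 m α := by
    intro p q hp hq hα
    refine mem_hwSubmodule_iff.2 ⟨fun g hg => ?_, fun dv b => ?_⟩
    · ext b
      simp only [tensorPow_mulVec_elemTensor, elemTensor_apply, hg.apply_of_val_eq_zero hp,
        hg.apply_of_val_eq_zero hq]
    · rw [hα, prod_mul_elemTensor]
  refine le_antisymm (hwSubmodule_le_span_pair hα) (span_le.2 ?_)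
  rintro _ (rfl | rfl)
  · exact hmem hp hq hα
  · exact hmem hq hp fun dv => (hα dv).trans (mul_comm _ _)

lemma isUpperUni_one_add_single (hpq : p.1 = q.1) (hlt : p.2.val < q.2.val) :
    IsUpperUni e m (1 + Matrix.single p q 1) := by
  refine ⟨fun b => ?_, fun b b' hb hroot => ?_⟩
  · rw [Matrix.add_apply, one_apply_eq, single_apply_of_ne _ _ _ _ _ (by grind), add_zero]
  · rw [Matrix.add_apply, one_apply_ne hb, single_apply_of_ne _ _ _ _ _ (by grind), add_zero]

lemma hwSubmodule_eq_span_sub (hα : ∀ dv, weightOf e m α dv = dv p * dv q)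
    (hpq : p.1 = q.1) (hp : p.2.val = 0) (hq : q.2.val = 1) :
    hwSubmodule e 2 m α = span ℂ {elemTensor p q - elemTensor q p} := by
  have hne : p ≠ q := by rintro rfl; omega
  apply le_antisymm
  · intro v hv
    obtain ⟨x, y, rfl⟩ := mem_span_pair.1 (hwSubmodule_le_span_pair hα hv)
    have hroot := (mem_hwSubmodule_iff.1 hv).1 _
      (isUpperUni_one_add_single hpq (by omega : p.2.val < q.2.val))
    have hxy : x + y = 0 := by
      simpa [mulVec_add, mulVec_smul, tensorPow_mulVec_elemTensor, elemTensor_apply, one_apply,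
        hne, hne.symm] using congrFun hroot ![p, p]
    obtain rfl := eq_neg_of_add_eq_zero_right hxy
    exact mem_span_singleton.2 ⟨x, by module⟩
  · rw [span_singleton_le_iff_mem]
    refine mem_hwSubmodule_iff.2 ⟨fun g hg => ?_, fun dv b => ?_⟩
    · ext b
      simp only [mulVec_sub, tensorPow_mulVec_elemTensor, Pi.sub_apply, elemTensor_apply,
        hg.apply_of_val_eq_zero hp, hg.apply_of_val_eq_one hpq hp hq (b _)]
      ring
    · rw [hα, Pi.sub_apply, mul_sub, prod_mul_elemTensor, prod_mul_elemTensor]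
      ring

end TwoFoldTensors

section Weights

variable {e : ℕ} [NeZero e] {m : ZMod e → ℕ} {p q : BIdx e m}

lemma lamOf_replicate (k a i : ℕ) :
    lamOf (Multiset.replicate k a) i = if i < k then a else 0 := by
  have hsort : (Multiset.replicate k a).sort (· ≤ ·) = List.replicate k a :=
    List.eq_replicate_iff.2 ⟨by simp, fun b hb =>
      Multiset.eq_of_mem_replicate ((Multiset.mem_sort _).1 hb)⟩
  rw [lamOf, hsort, List.reverse_replicate]
  split_ifs with h
  · rw [List.getD_eq_getElem _ _ (by simpa using h), List.getElem_replicate]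
  · rw [List.getD_eq_default _ _ (by simpa using h)]

lemma weightOf_eq_mul {α : ZMod e → Multiset ℕ}
    (h : ∀ b : BIdx e m, lamOf (α b.1) b.2.val = (if p = b then 1 else 0) + if q = b then 1 else 0)
    (dv : BIdx e m → ℂ) : weightOf e m α dv = dv p * dv q := by
  simp only [weightOf, h, pow_add, Finset.prod_mul_distrib, Finset.prod_pow_boole,
    Finset.mem_univ, if_true]

/-- The `e`-partition whose component `0` is `μ` and whose other components are empty; it gives
`α_{0,0}` for `μ = (1²)` and `α_0` for `μ = (2)`. -/
def oneBlock (e : ℕ) (μ : Multiset ℕ) : ZMod e → Multiset ℕ :=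
  fun k => if k = 0 then μ else 0

/-- The `e`-partition with one part `1` in each of the components `0` and `j`: the paper's
`α_{0,j}`. -/
def twoBlocks (e : ℕ) (j : ZMod e) : ZMod e → Multiset ℕ :=
  fun k => if k = 0 ∨ k = j then {1} else 0

lemma weightOf_oneBlock_one_one (hp₁ : p.1 = 0) (hp₂ : p.2.val = 0) (hq₁ : q.1 = 0)
    (hq₂ : q.2.val = 1) (dv : BIdx e m → ℂ) :
    weightOf e m (oneBlock e {1, 1}) dv = dv p * dv q := by
  refine weightOf_eq_mul (fun b => ?_) dv
  rw [oneBlock, show ({1, 1} : Multiset ℕ) = Multiset.replicate 2 1 from rfl,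
    ← Multiset.replicate_zero 0, apply_ite (lamOf · _), lamOf_replicate, lamOf_replicate]
  grind [bidx_eq_iff]

lemma weightOf_oneBlock_two (hp₁ : p.1 = 0) (hp₂ : p.2.val = 0) (dv : BIdx e m → ℂ) :
    weightOf e m (oneBlock e {2}) dv = dv p * dv p := by
  refine weightOf_eq_mul (fun b => ?_) dv
  rw [oneBlock, ← Multiset.replicate_one, ← Multiset.replicate_zero 0, apply_ite (lamOf · _),
    lamOf_replicate, lamOf_replicate]
  grind [bidx_eq_iff]

lemma weightOf_twoBlocks {j : ZMod e} (hj : j ≠ 0) (hp₁ : p.1 = 0) (hp₂ : p.2.val = 0)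
    (hq₁ : q.1 = j) (hq₂ : q.2.val = 0) (dv : BIdx e m → ℂ) :
    weightOf e m (twoBlocks e j) dv = dv p * dv q := by
  refine weightOf_eq_mul (fun b => ?_) dv
  rw [twoBlocks, ← Multiset.replicate_one, ← Multiset.replicate_zero 0, apply_ite (lamOf · _),
    lamOf_replicate, lamOf_replicate]
  grind [bidx_eq_iff]

lemma eq_zero_of_oneBlock_sub {e : ℕ} {μ : Multiset ℕ} (hμ : μ ≠ 0) {x : ZMod e}
    (h : ∀ k, oneBlock e μ (k - x) = oneBlock e μ k) : x = 0 := by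
  by_contra hx
  exact hμ (by simpa [oneBlock, hx] using h x)

lemma eq_zero_or_eq_of_twoBlocks_sub {e : ℕ} {j x : ZMod e}
    (h : ∀ k, twoBlocks e j (k - x) = twoBlocks e j k) : x = 0 ∨ x = j ∧ j + j = 0 := by
  rcases eq_or_ne x 0 with hx | hx
  · exact .inl hx
  have hxj : x = j := by simpa [twoBlocks, hx] using h x
  have hneg : -x = j := by simpa [twoBlocks, hx] using h 0
  exact .inr ⟨hxj, by rw [neg_eq_iff_add_eq_zero, hxj] at hneg; exact hneg⟩

lemma csize_twoBlocks_half {h : ℕ} (he : e = 2 * h) : csize e 1 (twoBlocks e h) = h := by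
  have hh : (h : ZMod e) + h = 0 := by
    rw [← Nat.cast_add, ← two_mul, ← he, ZMod.natCast_self]
  apply Nat.dvd_antisymm
  · refine csize_dvd fun k => ?_
    simp only [twoBlocks, mul_one, sub_eq_iff_eq_add, zero_add, hh, or_comm]
  · have hdvd : e ∣ 2 * (csize e 1 (twoBlocks e h) * 1) := by
      rw [← ZMod.natCast_eq_zero_iff, two_mul, Nat.cast_add]
      rcases eq_zero_or_eq_of_twoBlocks_sub
        (apply_sub_csize (d := 1) (α := twoBlocks e h)) with h₀ | ⟨h₁, -⟩
      · rw [h₀, add_zero]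
      · rw [h₁, hh]
    simpa using Nat.dvd_of_mul_dvd_mul_left two_pos (he.symm.dvd.trans hdvd)

end Weights

/-- The element `t₁ᵃ t₂⁻ᵃ` of `G(e,e,2)`: a rotation, with eigenvalues `ζᵃ` and `ζ⁻ᵃ`. -/
def rotElt {e : ℕ} (a : ZMod e) : Wt e 2 :=
  ⟨![Multiplicative.ofAdd a, Multiplicative.ofAdd (-a)], 1⟩

/-- The element `t₁ᵃ t₂⁻ᵃ (1 2)` of `G(e,e,2)`: a reflection. -/
def reflElt {e : ℕ} (a : ZMod e) : Wt e 2 :=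
  ⟨![Multiplicative.ofAdd a, Multiplicative.ofAdd (-a)], Equiv.swap 0 1⟩

section RootsOfUnity

variable {K : Type*} [Field K] {e : ℕ} {ζ : K}

lemma inv_pow_val_pow_half {h : ℕ} (he : e = 2 * h) (hζ : ζ ^ e = 1) (a : ZMod e) :
    ((ζ ^ a.val) ^ h)⁻¹ = (ζ ^ a.val) ^ h :=
  inv_eq_of_mul_eq_one_left (by
    rw [← pow_add, ← two_mul, ← he, ← pow_mul, mul_comm, pow_mul, hζ, one_pow])

variable [NeZero e]

lemma pow_val_neg (hζ : ζ ^ e = 1) (a : ZMod e) : ζ ^ (-a).val = (ζ ^ a.val)⁻¹ := by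
  have hdvd : e ∣ (-a).val + a.val := by
    rw [← ZMod.natCast_eq_zero_iff, Nat.cast_add, ZMod.natCast_zmod_val, ZMod.natCast_zmod_val,
      neg_add_cancel]
  obtain ⟨c, hc⟩ := hdvd
  exact eq_inv_of_mul_eq_one_left (by rw [← pow_add, hc, pow_mul, hζ, one_pow])

lemma pow_val_ne_zero (hζ : ζ ^ e = 1) (a : ZMod e) : ζ ^ a.val ≠ 0 :=
  pow_ne_zero _ fun h => zero_ne_one ((zero_pow (NeZero.ne e)).symm.trans (h ▸ hζ))

lemma pow_val_ne_one (hζ : IsPrimitiveRoot ζ e) {a : ZMod e} (ha : a ≠ 0) : ζ ^ a.val ≠ 1 :=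
  hζ.pow_ne_one_of_pos_of_lt ((ZMod.val_ne_zero a).2 ha) (ZMod.val_lt a)

end RootsOfUnity

section Characters

open Matrix Submodule

variable {e : ℕ} [NeZero e] {m : ZMod e → ℕ} {p q : BIdx e m} {ζ : ℂ}

lemma rhoMat_rotElt_mulVec_elemTensor (hζ : ζ ^ e = 1) (a : ZMod e) (p q : BIdx e m) :
    rhoMat e 2 ζ m (rotElt a) *ᵥ elemTensor p q =
      ((ζ ^ a.val) ^ p.1.val * ((ζ ^ a.val) ^ q.1.val)⁻¹) • elemTensor p q := by
  have hone : ⇑(1 : Equiv.Perm (Fin 2)).symm = id := rfl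
  rw [elemTensor, rhoMat_mulVec_single, Fin.prod_univ_two]
  simp [rotElt, hone, pow_mul, pow_val_neg hζ]

lemma rhoMat_reflElt_mulVec_elemTensor (hζ : ζ ^ e = 1) (a : ZMod e) (p q : BIdx e m) :
    rhoMat e 2 ζ m (reflElt a) *ᵥ elemTensor p q =
      ((ζ ^ a.val) ^ q.1.val * ((ζ ^ a.val) ^ p.1.val)⁻¹) • elemTensor q p := by
  have hswap : ![p, q] ∘ Equiv.swap 0 1 = ![q, p] := by
    ext i : 1
    fin_cases i <;> rfl
  rw [elemTensor, rhoMat_mulVec_single, Fin.prod_univ_two, elemTensor, ← hswap]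
  simp [reflElt, pow_mul, pow_val_neg hζ]

variable (hm : ∀ k, m (k + ((1 : ℕ) : ZMod e)) = m k)
include hm

lemma ZSub_oneBlock_one_one (hζ : ζ ^ e = 1) (hp₁ : p.1 = 0) (hp₂ : p.2.val = 0) (hq₁ : q.1 = 0)
    (hq₂ : q.2.val = 1) :
    ZSub e 2 1 m hm ζ (oneBlock e {1, 1}) 0 = span ℂ {elemTensor p q - elemTensor q p} := by
  rw [ZSub_eq_hwSubmodule hm hζ (dvd_csize_mul fun _ => eq_zero_of_oneBlock_sub (by simp)),
    hwSubmodule_eq_span_sub (weightOf_oneBlock_one_one hp₁ hp₂ hq₁ hq₂) (hp₁.trans hq₁.symm)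
      hp₂ hq₂]

lemma ZSub_oneBlock_two (hζ : ζ ^ e = 1) (hp₁ : p.1 = 0) (hp₂ : p.2.val = 0) :
    ZSub e 2 1 m hm ζ (oneBlock e {2}) 0 = span ℂ {elemTensor p p} := by
  rw [ZSub_eq_hwSubmodule hm hζ (dvd_csize_mul fun _ => eq_zero_of_oneBlock_sub (by simp)),
    hwSubmodule_eq_span_pair (weightOf_oneBlock_two hp₁ hp₂) hp₂ hp₂, Set.pair_eq_singleton]

lemma ZSub_twoBlocks {j : ZMod e} (hζ : ζ ^ e = 1) (hj : j + j ≠ 0) (hp₁ : p.1 = 0)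
    (hp₂ : p.2.val = 0) (hq₁ : q.1 = j) (hq₂ : q.2.val = 0) :
    ZSub e 2 1 m hm ζ (twoBlocks e j) 0 = span ℂ {elemTensor p q, elemTensor q p} := by
  have hj₀ : j ≠ 0 := by rintro rfl; exact hj (add_zero 0)
  rw [ZSub_eq_hwSubmodule hm hζ (dvd_csize_mul fun _ h =>
      (eq_zero_or_eq_of_twoBlocks_sub h).resolve_right fun h' => hj h'.2),
    hwSubmodule_eq_span_pair (weightOf_twoBlocks hj₀ hp₁ hp₂ hq₁ hq₂) hp₂ hq₂]

lemma ZSub_twoBlocks_half {h : ℕ} (he : e = 2 * h) (hζ : ζ ^ e = 1) (hp₁ : p.1 = 0)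
    (hp₂ : p.2.val = 0) (hq₁ : q.1 = h) (hq₂ : q.2.val = 0) (r : ℕ) :
    ZSub e 2 1 m hm ζ (twoBlocks e h) r =
      span ℂ {elemTensor p q + ζ ^ (h * r) • elemTensor q p} := by
  have hh : (h : ZMod e) ≠ 0 := by
    have := NeZero.pos e
    rw [Ne, ZMod.natCast_eq_zero_iff]
    exact Nat.not_dvd_of_pos_of_lt (by omega) (by omega)
  have hpq : (tauB e 1 m hm)^[h] p = q := bidx_ext
    (by rw [tauB_iterate_fst, hp₁, hq₁, zero_add, mul_one])
    (by rw [tauB_iterate_snd, hp₂, hq₂])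
  have hqp : (tauB e 1 m hm)^[h] q = p := bidx_ext
    (by
      rw [tauB_iterate_fst, hp₁, hq₁, mul_one, ← Nat.cast_add, ← two_mul, ← he,
        ZMod.natCast_self])
    (by rw [tauB_iterate_snd, hp₂, hq₂])
  rw [ZSub, csize_twoBlocks_half he, mul_one,
    hwSubmodule_eq_span_pair (weightOf_twoBlocks hh hp₁ hp₂ hq₁ hq₂) hp₂ hq₂]
  refine span_pair_inf_eigenspace_of_swap ?_ ?_ ?_
  · rw [mulVecLin_apply, tauMat_pow_mulVec_elemTensor, hpq, hqp]
  · rw [mulVecLin_apply, tauMat_pow_mulVec_elemTensor, hpq, hqp]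
  · rw [← pow_add, ← two_mul, ← mul_assoc, ← he, pow_mul, hζ, one_pow]

end Characters

section CharacterValues

open Matrix

variable {e : ℕ} [NeZero e] {m : ZMod e → ℕ} {ζ : ℂ}

lemma charExt_of_ZSub_eq_span_singleton {n d : ℕ} {hm : ∀ k, m (k + (d : ZMod e)) = m k}
    {α : ZMod e → Multiset ℕ} {r : ℕ} {v : TIdx e n m → ℂ}
    (hZ : ZSub e n d m hm ζ α r = Submodule.span ℂ {v}) (hv : v ≠ 0) {w : Wt e n} {c : ℂ}
    (hw : rhoMat e n ζ m w *ᵥ v = c • v) : charExt e n d m hm ζ α r w = c := by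
  rw [charExt, hZ]
  exact traceOn_span_singleton hv hw

variable (hm : ∀ k, m (k + ((1 : ℕ) : ZMod e)) = m k)

lemma charExt_oneBlock_one_one (hm₀ : 2 ≤ m 0) (hζ : ζ ^ e = 1) (a : ZMod e) :
    charExt e 2 1 m hm ζ (oneBlock e {1, 1}) 0 (rotElt a) = 1 ∧
      charExt e 2 1 m hm ζ (oneBlock e {1, 1}) 0 (reflElt a) = -1 := by
  let p : BIdx e m := ⟨0, ⟨0, by omega⟩⟩
  let q : BIdx e m := ⟨0, ⟨1, hm₀⟩⟩
  have hpq : p ≠ q := by simp [p, q]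
  have hZ := ZSub_oneBlock_one_one hm hζ (p := p) (q := q) rfl rfl rfl rfl
  have hne : elemTensor p q - elemTensor q p ≠ 0 :=
    sub_ne_zero.2 ((linearIndependent_elemTensor_pair hpq).injective.ne zero_ne_one)
  constructor <;> refine charExt_of_ZSub_eq_span_singleton hZ hne ?_
  · simp only [mulVec_sub, rhoMat_rotElt_mulVec_elemTensor hζ, p, q, ZMod.val_zero, pow_zero,
      inv_one, mul_one, one_smul]
  · simp only [mulVec_sub, rhoMat_reflElt_mulVec_elemTensor hζ, p, q, ZMod.val_zero, pow_zero,
      inv_one, mul_one, one_smul, neg_smul, neg_sub]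

lemma charExt_oneBlock_two (hm₀ : 0 < m 0) (hζ : ζ ^ e = 1) (a : ZMod e) :
    charExt e 2 1 m hm ζ (oneBlock e {2}) 0 (rotElt a) = 1 ∧
      charExt e 2 1 m hm ζ (oneBlock e {2}) 0 (reflElt a) = 1 := by
  let p : BIdx e m := ⟨0, ⟨0, hm₀⟩⟩
  have hZ := ZSub_oneBlock_two hm hζ (p := p) rfl rfl
  constructor <;> refine charExt_of_ZSub_eq_span_singleton hZ (elemTensor_ne_zero p p) ?_
  · simp only [rhoMat_rotElt_mulVec_elemTensor hζ, p, ZMod.val_zero, pow_zero, inv_one, mul_one]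
  · simp only [rhoMat_reflElt_mulVec_elemTensor hζ, p, ZMod.val_zero, pow_zero, inv_one, mul_one]

lemma charExt_twoBlocks {j : ZMod e} (hm₀ : 0 < m 0) (hmj : 0 < m j) (hζ : ζ ^ e = 1)
    (hj : j + j ≠ 0) (a : ZMod e) :
    charExt e 2 1 m hm ζ (twoBlocks e j) 0 (rotElt a) =
        (ζ ^ a.val) ^ j.val + ((ζ ^ a.val) ^ j.val)⁻¹ ∧
      charExt e 2 1 m hm ζ (twoBlocks e j) 0 (reflElt a) = 0 := by
  let p : BIdx e m := ⟨0, ⟨0, hm₀⟩⟩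
  let q : BIdx e m := ⟨j, ⟨0, hmj⟩⟩
  have hpq : p ≠ q := fun h => hj (by
    rw [← show (0 : ZMod e) = j from congrArg Sigma.fst h, add_zero])
  have hind := linearIndependent_elemTensor_pair hpq
  rw [charExt, charExt, ZSub_twoBlocks hm hζ hj (p := p) (q := q) rfl rfl rfl rfl]
  constructor
  · rw [traceOn_span_pair hind (a := ((ζ ^ a.val) ^ j.val)⁻¹) (b := 0) (c := 0)
      (d := (ζ ^ a.val) ^ j.val), add_comm] <;>
      simp [rhoMat_rotElt_mulVec_elemTensor hζ, p, q]
  · rw [traceOn_span_pair hind (a := 0) (b := ((ζ ^ a.val) ^ j.val)⁻¹)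
      (c := (ζ ^ a.val) ^ j.val) (d := 0), add_zero] <;>
      simp [rhoMat_reflElt_mulVec_elemTensor hζ, p, q]

lemma charExt_twoBlocks_half {h : ℕ} (he : e = 2 * h) (hm₀ : 0 < m 0) (hmh : 0 < m h)
    (hζ : ζ ^ e = 1) (r : ℕ) (a : ZMod e) :
    charExt e 2 1 m hm ζ (twoBlocks e h) r (rotElt a) = (ζ ^ a.val) ^ h ∧
      charExt e 2 1 m hm ζ (twoBlocks e h) r (reflElt a) = ζ ^ (h * r) * (ζ ^ a.val) ^ h := by
  let p : BIdx e m := ⟨0, ⟨0, hm₀⟩⟩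
  let q : BIdx e m := ⟨h, ⟨0, hmh⟩⟩
  have hpos := NeZero.pos e
  have hval : (h : ZMod e).val = h := ZMod.val_natCast_of_lt (by omega)
  have hpq : p ≠ q := fun h' => by
    have := congrArg (fun b => b.1.val) h'
    simp only [p, q, ZMod.val_zero, hval] at this
    omega
  have hind := linearIndependent_elemTensor_pair hpq
  have hZ := ZSub_twoBlocks_half hm he hζ (p := p) (q := q) rfl rfl rfl rfl r
  have hne : elemTensor p q + ζ ^ (h * r) • elemTensor q p ≠ 0 := fun h₀ =>
    one_ne_zero (LinearIndependent.pair_iff.1 hind 1 (ζ ^ (h * r)) (by rwa [one_smul])).1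
  have hinv := inv_pow_val_pow_half he hζ a
  have hsq : ζ ^ (h * r) * ζ ^ (h * r) = 1 := by
    rw [← pow_add, ← two_mul, ← mul_assoc, ← he, pow_mul, hζ, one_pow]
  constructor <;> refine charExt_of_ZSub_eq_span_singleton hZ hne ?_
  · simp only [mulVec_add, mulVec_smul, rhoMat_rotElt_mulVec_elemTensor hζ, p, q, ZMod.val_zero,
      pow_zero, hval, hinv, one_mul, inv_one, mul_one]
    module
  · simp only [mulVec_add, mulVec_smul, rhoMat_reflElt_mulVec_elemTensor hζ, p, q, ZMod.val_zero,
      pow_zero, hval, hinv, one_mul, inv_one, mul_one]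
    linear_combination (norm := module)
      (-hsq) • ((ζ ^ a.val) ^ h • elemTensor q p)

end CharacterValues

/-- The exponent `j` such that the `i`-th character of the dihedral group restricts to a multiple
of `x ↦ xʲ + x⁻ʲ` on the rotations: `0` for `ε` and `1`, `j` for `ρ_j`, and `e/2` for the two
remaining linear characters when `e` is even. -/
def dihedralExp (e i : ℕ) : ℕ :=
  if 2 * i ≤ e then i else if 2 * i = e + 2 then i - 1 else 0

/-- The coefficient of `xʲ + x⁻ʲ`, `j = dihedralExp e i`, in the `i`-th character of the dihedral
group on the rotations: `1` for the characters of degree two, `1/2` for the linear ones. -/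
noncomputable def rotCoeff (e i : ℕ) : ℂ := if 0 < i ∧ 2 * i < e then 1 else 1 / 2

/-- The coefficient of `xʲ`, `j = dihedralExp e i`, in the `i`-th character of the dihedral group
on the reflections: `0` for the characters of degree two, a sign for the linear ones. -/
noncomputable def reflCoeff (e i : ℕ) : ℂ :=
  if i = 0 ∨ 2 * i = e + 2 then -1 else if 2 * i < e then 0 else 1

lemma two_mul_dihedralK_add_one (e : ℕ) :
    2 * (dihedralK e + 1) = if Even e then e + 4 else e + 1 := by
  unfold dihedralK
  split_ifs with he
  · obtain ⟨h, rfl⟩ := he; omega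
  · rw [Nat.not_even_iff_odd] at he
    obtain ⟨h, rfl⟩ := he; omega

lemma dihedral_index_cases {e i : ℕ} (hi : i < dihedralK e + 2) :
    i = 0 ∨ (0 < i ∧ 2 * i < e) ∨ 2 * i = e ∨ 2 * i = e + 2 ∨ i = dihedralK e + 1 := by
  have hK := two_mul_dihedralK_add_one e
  split_ifs at hK with he
  · obtain ⟨h, rfl⟩ := he; omega
  · rw [Nat.not_even_iff_odd] at he
    obtain ⟨h, rfl⟩ := he; omega

lemma lt_two_mul_dihedralK_add_one (e : ℕ) : e < 2 * (dihedralK e + 1) := by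
  rw [two_mul_dihedralK_add_one]; split_ifs <;> omega

lemma two_mul_dihedralK_add_one_ne (e : ℕ) : 2 * (dihedralK e + 1) ≠ e + 2 := by
  rw [two_mul_dihedralK_add_one]; split_ifs <;> omega

lemma dihedral_coeffs_zero (e : ℕ) :
    dihedralExp e 0 = 0 ∧ rotCoeff e 0 = 1 / 2 ∧ reflCoeff e 0 = -1 := by
  simp [dihedralExp, rotCoeff, reflCoeff]

lemma dihedral_coeffs_of_two_mul_lt {e i : ℕ} (hi₀ : 0 < i) (hi : 2 * i < e) :
    dihedralExp e i = i ∧ rotCoeff e i = 1 ∧ reflCoeff e i = 0 :=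
  ⟨if_pos hi.le, if_pos ⟨hi₀, hi⟩, by rw [reflCoeff, if_neg (by omega), if_pos hi]⟩

lemma dihedral_coeffs_of_two_mul_eq {e i : ℕ} (hi₀ : 0 < i) (hi : 2 * i = e) :
    dihedralExp e i = i ∧ rotCoeff e i = 1 / 2 ∧ reflCoeff e i = 1 :=
  ⟨if_pos hi.le, if_neg (by omega), by rw [reflCoeff, if_neg (by omega), if_neg (by omega)]⟩

lemma dihedral_coeffs_of_two_mul_eq_add_two {e i : ℕ} (hi : 2 * i = e + 2) :
    dihedralExp e i = i - 1 ∧ rotCoeff e i = 1 / 2 ∧ reflCoeff e i = -1 :=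
  ⟨by rw [dihedralExp, if_neg (by omega), if_pos hi], if_neg (by omega), if_pos (Or.inr hi)⟩

lemma dihedral_coeffs_last (e : ℕ) :
    dihedralExp e (dihedralK e + 1) = 0 ∧ rotCoeff e (dihedralK e + 1) = 1 / 2 ∧
      reflCoeff e (dihedralK e + 1) = 1 := by
  have hK := lt_two_mul_dihedralK_add_one e
  have hK' := two_mul_dihedralK_add_one_ne e
  exact ⟨by rw [dihedralExp, if_neg (by omega), if_neg hK'], if_neg (by omega),
    by rw [reflCoeff, if_neg (by omega), if_neg (by omega)]⟩

section DihedralIdx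

variable {e : ℕ} [NeZero e]

lemma dihedralIdx_zero : dihedralIdx e 0 = (oneBlock e {1, 1}, 0) := if_pos rfl

lemma dihedralIdx_last : dihedralIdx e (dihedralK e + 1) = (oneBlock e {2}, 0) := by
  rw [dihedralIdx, if_neg (Nat.succ_ne_zero _), if_pos rfl]; rfl

lemma dihedralIdx_of_two_mul_le {i : ℕ} (hi₀ : 0 < i) (hi : 2 * i ≤ e) :
    dihedralIdx e i = (twoBlocks e i, 0) := by
  have hK := lt_two_mul_dihedralK_add_one e
  rw [dihedralIdx, if_neg hi₀.ne', if_neg (by omega), if_neg (by omega),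
    min_eq_left (by omega : i ≤ e / 2)]
  rfl

lemma dihedralIdx_half_add_one {h : ℕ} (he : e = 2 * h) :
    dihedralIdx e (h + 1) = (twoBlocks e h, 1) := by
  have hK := two_mul_dihedralK_add_one_ne e
  have hdiv : e / 2 = h := by omega
  rw [dihedralIdx, if_neg (Nat.succ_ne_zero _), if_neg (by omega),
    if_pos ⟨⟨h, by omega⟩, by omega⟩, hdiv]
  rfl

theorem charExt_dihedralIdx {m : ZMod e → ℕ} {ζ : ℂ}
    (hm : ∀ k, m (k + ((1 : ℕ) : ZMod e)) = m k) (hmn : ∀ k, 2 ≤ m k)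
    (hζ : IsPrimitiveRoot ζ e) {i : ℕ} (hi : i < dihedralK e + 2) (a : ZMod e) :
    charExt e 2 1 m hm ζ (dihedralIdx e i).1 (dihedralIdx e i).2 (rotElt a) =
        rotCoeff e i *
          ((ζ ^ a.val) ^ dihedralExp e i + ((ζ ^ a.val) ^ dihedralExp e i)⁻¹) ∧
      charExt e 2 1 m hm ζ (dihedralIdx e i).1 (dihedralIdx e i).2 (reflElt a) =
        reflCoeff e i * (ζ ^ a.val) ^ dihedralExp e i := by
  have hpos (k : ZMod e) : 0 < m k := zero_lt_two.trans_le (hmn k)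
  have he := NeZero.pos e
  have hone := hζ.pow_eq_one
  rcases dihedral_index_cases hi with rfl | ⟨hi₀, hie⟩ | hie | hie | rfl
  · obtain ⟨hexp, hrot, hrefl⟩ := dihedral_coeffs_zero e
    rw [dihedralIdx_zero, hexp, hrot, hrefl]
    convert charExt_oneBlock_one_one hm (hmn 0) hone a using 2 <;> norm_num
  · obtain ⟨hexp, hrot, hrefl⟩ := dihedral_coeffs_of_two_mul_lt hi₀ hie
    have hval : (i : ZMod e).val = i := ZMod.val_natCast_of_lt (by omega)
    have hi₂ : (i : ZMod e) + i ≠ 0 := by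
      rw [← Nat.cast_add, Ne, ZMod.natCast_eq_zero_iff]
      exact Nat.not_dvd_of_pos_of_lt (by omega) (by omega)
    rw [dihedralIdx_of_two_mul_le hi₀ hie.le, hexp, hrot, hrefl, one_mul, zero_mul]
    simpa only [hval] using charExt_twoBlocks hm (hpos 0) (hpos i) hone hi₂ a
  · obtain ⟨hexp, hrot, hrefl⟩ := dihedral_coeffs_of_two_mul_eq (by omega) hie
    rw [dihedralIdx_of_two_mul_le (by omega) hie.le, hexp, hrot, hrefl,
      inv_pow_val_pow_half hie.symm hone]
    convert charExt_twoBlocks_half hm hie.symm (hpos 0) (hpos i) hone 0 a using 2 <;> ring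
  · obtain ⟨h, rfl⟩ : ∃ h, i = h + 1 := ⟨i - 1, by omega⟩
    have heh : e = 2 * h := by omega
    have hneg : ζ ^ h = -1 := (hζ.pow he (heh.trans (mul_comm 2 h))).eq_neg_one_of_two_right
    obtain ⟨hexp, hrot, hrefl⟩ := dihedral_coeffs_of_two_mul_eq_add_two hie
    rw [dihedralIdx_half_add_one heh, hexp, hrot, hrefl, Nat.add_sub_cancel,
      inv_pow_val_pow_half heh hone, ← hneg]
    convert charExt_twoBlocks_half hm heh (hpos 0) (hpos h) hone 1 a using 2
    · ring
    · rw [mul_one]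
  · obtain ⟨hexp, hrot, hrefl⟩ := dihedral_coeffs_last e
    rw [dihedralIdx_last, hexp, hrot, hrefl]
    convert charExt_oneBlock_two hm (hpos 0) hone a using 2 <;> norm_num

end DihedralIdx

section DihedralGroup

open Matrix

variable {e : ℕ}

lemma rotElt_injective : Function.Injective (rotElt (e := e)) := fun a b h => by
  simpa [rotElt] using congrFun (congrArg SemidirectProduct.left h) 0

lemma reflElt_injective : Function.Injective (reflElt (e := e)) := fun a b h => by
  simpa [reflElt] using congrFun (congrArg SemidirectProduct.left h) 0

lemma reflElt_ne_rotElt (a b : ZMod e) : reflElt a ≠ rotElt b := fun h => by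
  simpa [reflElt, rotElt] using congrArg (fun w : Wt e 2 => w.right 0) h

lemma rotElt_zero : rotElt (0 : ZMod e) = 1 := by
  refine SemidirectProduct.ext (funext fun i => ?_) rfl
  fin_cases i <;> simp [rotElt]

lemma perm_fin_two_eq_one_or_eq_swap (x : Equiv.Perm (Fin 2)) : x = 1 ∨ x = Equiv.swap 0 1 := by
  revert x
  decide

lemma mem_Wgrp_iff_add_eq_zero (hp : e ∣ e) (w : Wt e 2) :
    w ∈ Wgrp e e 2 hp ↔ (w.left 0).toAdd + (w.left 1).toAdd = 0 := by
  rw [Wgrp, MonoidHom.mem_ker, wsumHom, MonoidHom.coe_mk, OneHom.coe_mk, Fin.sum_univ_two,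
    ofAdd_eq_one, ← map_add]
  simp

lemma mem_Wgrp_iff (hp : e ∣ e) (w : Wt e 2) :
    w ∈ Wgrp e e 2 hp ↔ (∃ a, w = rotElt a) ∨ ∃ a, w = reflElt a := by
  rw [mem_Wgrp_iff_add_eq_zero]
  refine ⟨fun h => ?_, by rintro (⟨a, rfl⟩ | ⟨a, rfl⟩) <;> simp [rotElt, reflElt]⟩
  have hleft : w.left = ![Multiplicative.ofAdd (w.left 0).toAdd,
      Multiplicative.ofAdd (-(w.left 0).toAdd)] := by
    rw [← eq_neg_of_add_eq_zero_right h]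
    funext i
    fin_cases i <;> rfl
  exact (perm_fin_two_eq_one_or_eq_swap w.right).imp (fun hr => ⟨_, SemidirectProduct.ext hleft hr⟩)
    fun hr => ⟨_, SemidirectProduct.ext hleft hr⟩

lemma bijective_sumElim_rotElt_reflElt (hp : e ∣ e) :
    Function.Bijective fun s : ZMod e ⊕ ZMod e =>
      (⟨Sum.elim rotElt reflElt s, (mem_Wgrp_iff hp _).2 (by
        rcases s with a | a
        exacts [Or.inl ⟨a, rfl⟩, Or.inr ⟨a, rfl⟩])⟩ : Wgrp e e 2 hp) := by
  constructor
  · rw [← Function.Injective.of_comp_iff Subtype.val_injective]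
    exact rotElt_injective.sumElim reflElt_injective fun a b => (reflElt_ne_rotElt b a).symm
  · rintro ⟨w, hw⟩
    rcases (mem_Wgrp_iff hp w).1 hw with ⟨a, rfl⟩ | ⟨a, rfl⟩
    exacts [⟨Sum.inl a, rfl⟩, ⟨Sum.inr a, rfl⟩]

variable [NeZero e]

lemma card_Wgrp (hp : e ∣ e) : Nat.card (Wgrp e e 2 hp) = 2 * e := by
  rw [← Nat.card_eq_of_bijective _ (bijective_sumElim_rotElt_reflElt hp), Nat.card_sum,
    Nat.card_zmod, two_mul]

lemma sum_inCoset_zero (hp : e ∣ e) (f : Wt e 2 → ℂ) :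
    ∑ w ∈ Finset.univ.filter (fun w => inCoset e e 2 hp 0 w), f w =
      ∑ a, f (rotElt a) + ∑ a, f (reflElt a) := by
  have hcoset (w : Wt e 2) : w ∈ Finset.univ.filter (fun w => inCoset e e 2 hp 0 w) ↔
      w ∈ Wgrp e e 2 hp := by simp [inCoset]
  rw [Finset.sum_subtype _ hcoset,
    ← (bijective_sumElim_rotElt_reflElt hp).sum_comp fun w : Wgrp e e 2 hp => f w,
    Fintype.sum_sum_type]
  rfl

variable {ζ : ℂ}

lemma refMat_rotElt (hζ : ζ ^ e = 1) (a : ZMod e) :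
    refMat e 2 ζ (rotElt a) = !![ζ ^ a.val, 0; 0, (ζ ^ a.val)⁻¹] := by
  ext i j
  fin_cases i <;> fin_cases j <;> simp [refMat, rotElt, zmpow, pow_val_neg hζ]

lemma refMat_reflElt (hζ : ζ ^ e = 1) (a : ZMod e) :
    refMat e 2 ζ (reflElt a) = !![0, ζ ^ a.val; (ζ ^ a.val)⁻¹, 0] := by
  ext i j
  fin_cases i <;> fin_cases j <;> simp [refMat, reflElt, zmpow, pow_val_neg hζ]

lemma det_refMat_rotElt (hζ : ζ ^ e = 1) (a : ZMod e) : (refMat e 2 ζ (rotElt a)).det = 1 := by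
  rw [refMat_rotElt hζ, det_fin_two_of, mul_inv_cancel₀ (pow_val_ne_zero hζ a), zero_mul, sub_zero]

lemma det_refMat_reflElt (hζ : ζ ^ e = 1) (a : ZMod e) :
    (refMat e 2 ζ (reflElt a)).det = -1 := by
  rw [refMat_reflElt hζ, det_fin_two_of, mul_inv_cancel₀ (pow_val_ne_zero hζ a), zero_mul, zero_sub]

lemma det_smul_one_sub_refMat_rotElt (hζ : ζ ^ e = 1) (t : ℂ) (a : ZMod e) :
    (t • (1 : Matrix (Fin 2) (Fin 2) ℂ) - refMat e 2 ζ (rotElt a)).det =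
      (t - ζ ^ a.val) * (t - (ζ ^ a.val)⁻¹) := by
  simp [refMat_rotElt hζ, det_fin_two]

lemma det_smul_one_sub_refMat_reflElt (hζ : ζ ^ e = 1) (t : ℂ) (a : ZMod e) :
    (t • (1 : Matrix (Fin 2) (Fin 2) ℂ) - refMat e 2 ζ (reflElt a)).det = t ^ 2 - 1 := by
  simp [refMat_reflElt hζ, det_fin_two, pow_val_ne_zero hζ a, sq]

lemma rank_refMat_rotElt_sub_one_ne_one (hζ : IsPrimitiveRoot ζ e) {a : ZMod e} (ha : a ≠ 0) :
    (refMat e 2 ζ (rotElt a) - 1).rank ≠ 1 := by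
  have hx := pow_val_ne_one hζ ha
  have hunit : IsUnit (refMat e 2 ζ (rotElt a) - 1) := by
    rw [isUnit_iff_isUnit_det, isUnit_iff_ne_zero, refMat_rotElt hζ.pow_eq_one, det_fin_two]
    simpa using ⟨sub_ne_zero.2 hx, sub_ne_zero.2 (inv_eq_one.not.2 hx)⟩
  rw [rank_of_isUnit _ hunit, Fintype.card_fin]
  norm_num

lemma rank_refMat_reflElt_sub_one (hζ : ζ ^ e = 1) (a : ZMod e) :
    (refMat e 2 ζ (reflElt a) - 1).rank = 1 := by
  have hrank : refMat e 2 ζ (reflElt a) - 1 =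
      vecMulVec ![1, -(ζ ^ a.val)⁻¹] ![-1, ζ ^ a.val] := by
    rw [refMat_reflElt hζ]
    ext i j
    fin_cases i <;> fin_cases j <;> simp [vecMulVec_apply, pow_val_ne_zero hζ a]
  refine le_antisymm (hrank ▸ rank_vecMulVec_le _ _) (Nat.one_le_iff_ne_zero.2 fun h => ?_)
  have hzero : (refMat e 2 ζ (reflElt a) - 1).mulVecLin = 0 :=
    LinearMap.range_eq_bot.1 (Submodule.finrank_eq_zero.1 h)
  have hentry := congrFun (LinearMap.congr_fun hzero (Pi.single 0 1)) 0
  rw [mulVecLin_apply, mulVec_single_one, hrank] at hentry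
  simp at hentry

lemma Nstar_dihedral (hp : e ∣ e) (hζ : IsPrimitiveRoot ζ e) : Nstar e e 2 hp ζ = e := by
  have hbij : Function.Bijective fun a : ZMod e =>
      (⟨reflElt a, (mem_Wgrp_iff hp _).2 (Or.inr ⟨a, rfl⟩),
        rotElt_zero (e := e) ▸ reflElt_ne_rotElt a 0, rank_refMat_reflElt_sub_one hζ.pow_eq_one a⟩ :
        {w : Wt e 2 // w ∈ Wgrp e e 2 hp ∧ w ≠ 1 ∧ (refMat e 2 ζ w - 1).rank = 1}) := by
    refine ⟨fun a b h => reflElt_injective (congrArg Subtype.val h), ?_⟩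
    rintro ⟨w, hw, hne, hrank⟩
    rcases (mem_Wgrp_iff hp w).1 hw with ⟨a, rfl⟩ | ⟨a, rfl⟩
    · have ha : a ≠ 0 := by rintro rfl; exact hne rotElt_zero
      exact absurd hrank (rank_refMat_rotElt_sub_one_ne_one hζ ha)
    · exact ⟨a, rfl⟩
  rw [Nstar, ← Nat.card_eq_of_bijective _ hbij, Nat.card_zmod]

end DihedralGroup

/-- The fake degree `t ^ N + t ^ (e - N)` of the character `ρ_N` of the dihedral group of order
`2e`, for `0 < N < e / 2`; it is used for all `N ≤ e`. -/
def fakeDegree {R : Type*} [Semiring R] (e : ℕ) (t : R) (N : ℕ) : R := t ^ N + t ^ (e - N)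

/-- The contribution `(t² - 1)(tᵉ - 1) / ((t - x)(t - x⁻¹))` of a rotation with eigenvalues `x`
and `x⁻¹` to the Molien sum `Rq`, without the factor `|W|⁻¹`. -/
def molienKernel {K : Type*} [Field K] (e : ℕ) (t x : K) : K :=
  (t ^ 2 - 1) * (t ^ e - 1) / ((t - x) * (t - x⁻¹))

section MolienSums

variable {K : Type*} [Field K] {e : ℕ}

lemma geom_sum_mul_sub {t x : K} (hx : x ≠ 0) (hxe : x ^ e = 1) :
    (∑ j ∈ Finset.range e, t ^ j * (x ^ j)⁻¹) * (t - x) = x * (t ^ e - 1) := by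
  have hgeom := geom_sum_mul (t * x⁻¹) e
  simp only [mul_pow, inv_pow, hxe, inv_one, mul_one] at hgeom
  rw [← hgeom]
  field_simp

lemma geom_sum_reflect_mul_sub {t x : K} (hx : x ≠ 0) (hxe : x ^ e = 1) :
    (∑ j ∈ Finset.range e, t ^ (e - j) * (x ^ j)⁻¹) * (t - x⁻¹) = t * (t ^ e - 1) := by
  have hreflect : ∑ j ∈ Finset.range e, t ^ (e - j) * (x ^ j)⁻¹ =
      t * x * ∑ j ∈ Finset.range e, (t * x) ^ j := by
    rw [← Finset.sum_range_reflect, Finset.mul_sum]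
    refine Finset.sum_congr rfl fun j hj => ?_
    have hj := Finset.mem_range.1 hj
    have hinv : (x ^ (e - 1 - j))⁻¹ = x ^ (j + 1) := inv_eq_of_mul_eq_one_left (by
      rw [← pow_add, show j + 1 + (e - 1 - j) = e by omega, hxe])
    rw [hinv, show e - (e - 1 - j) = j + 1 by omega, ← pow_succ', mul_pow]
  have hgeom := geom_sum_mul (t * x) e
  rw [mul_pow, hxe, mul_one] at hgeom
  rw [hreflect, ← hgeom]
  field_simp

lemma molienKernel_eq_sum {t x : K} (hte : t ^ e ≠ 1) (hx : x ≠ 0) (hxe : x ^ e = 1) :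
    molienKernel e t x =
      ∑ j ∈ Finset.range e, fakeDegree e t j * (x ^ j)⁻¹ := by
  have hne {y : K} (hy : y ^ e = 1) : t - y ≠ 0 := fun h => hte (sub_eq_zero.1 h ▸ hy)
  rw [molienKernel, div_eq_iff (mul_ne_zero (hne hxe) (hne (by rw [inv_pow, hxe, inv_one])))]
  simp only [fakeDegree, add_mul, Finset.sum_add_distrib]
  linear_combination (-(t - x⁻¹)) * geom_sum_mul_sub (t := t) hx hxe -
    (t - x) * geom_sum_reflect_mul_sub (t := t) hx hxe + (t ^ e - 1) * mul_inv_cancel₀ hx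

variable [NeZero e]

lemma sum_pow_val {y : K} (hy : y ^ e = 1) :
    ∑ a : ZMod e, y ^ a.val = if y = 1 then (e : K) else 0 := by
  have hrange : ∑ a : ZMod e, y ^ a.val = ∑ i ∈ Finset.range e, y ^ i :=
    Finset.sum_nbij' ZMod.val Nat.cast (fun a _ => Finset.mem_range.2 (ZMod.val_lt a))
      (fun _ _ => Finset.mem_univ _) (fun a _ => ZMod.natCast_zmod_val a)
      (fun i hi => ZMod.val_natCast_of_lt (Finset.mem_range.1 hi)) fun _ _ => rfl
  rw [hrange]
  split_ifs with h
  · simp [h]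
  · rw [geom_sum_eq h, hy, sub_self, zero_div]

variable {ζ : K}

lemma sum_pow_mul_inv_pow (hζ : IsPrimitiveRoot ζ e) {N j : ℕ} (hN : N < e) (hj : j < e) :
    ∑ a : ZMod e, (ζ ^ a.val) ^ N * ((ζ ^ a.val) ^ j)⁻¹ = if j = N then (e : K) else 0 := by
  have hζ₀ : ζ ≠ 0 := hζ.ne_zero (NeZero.ne e)
  have hterm (a : ZMod e) :
      (ζ ^ a.val) ^ N * ((ζ ^ a.val) ^ j)⁻¹ = (ζ ^ N * (ζ ^ j)⁻¹) ^ a.val := by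
    rw [mul_pow, inv_pow, pow_right_comm, pow_right_comm ζ j]
  have hone : ζ ^ N * (ζ ^ j)⁻¹ = 1 ↔ j = N := by
    rw [mul_inv_eq_one₀ (pow_ne_zero _ hζ₀)]
    exact ⟨fun h => (hζ.pow_inj hN hj h).symm, fun h => by rw [h]⟩
  simp only [hterm]
  rw [sum_pow_val (by rw [mul_pow, inv_pow, pow_right_comm, pow_right_comm ζ j, hζ.pow_eq_one,
    one_pow, one_pow, inv_one, mul_one])]
  simp only [hone]

lemma sum_molienKernel_mul_pow (hζ : IsPrimitiveRoot ζ e) {t : K} (hte : t ^ e ≠ 1) {N : ℕ}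
    (hN : N < e) :
    ∑ a : ZMod e, molienKernel e t (ζ ^ a.val) * (ζ ^ a.val) ^ N =
      e * fakeDegree e t N :=
  calc
    _ = ∑ a : ZMod e, ∑ j ∈ Finset.range e,
          fakeDegree e t j * ((ζ ^ a.val) ^ N * ((ζ ^ a.val) ^ j)⁻¹) := by
      refine Finset.sum_congr rfl fun a _ => ?_
      rw [molienKernel_eq_sum hte (pow_ne_zero _ (hζ.ne_zero (NeZero.ne e)))
        (by rw [pow_right_comm, hζ.pow_eq_one, one_pow]), Finset.sum_mul]
      exact Finset.sum_congr rfl fun j _ => by ring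
    _ = ∑ j ∈ Finset.range e, fakeDegree e t j * if j = N then (e : K) else 0 := by
      rw [Finset.sum_comm]
      exact Finset.sum_congr rfl fun j hj => by
        rw [← Finset.mul_sum, sum_pow_mul_inv_pow hζ hN (Finset.mem_range.1 hj)]
    _ = e * fakeDegree e t N := by simp [hN, mul_comm]

lemma sum_molienKernel_mul_add_inv (hζ : IsPrimitiveRoot ζ e) {t : K} (hte : t ^ e ≠ 1) {N : ℕ}
    (hN : N ≤ e) :
    ∑ a : ZMod e, molienKernel e t (ζ ^ a.val) * ((ζ ^ a.val) ^ N + ((ζ ^ a.val) ^ N)⁻¹) =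
      2 * e * fakeDegree e t N := by
  have hpos : ∑ a : ZMod e, molienKernel e t (ζ ^ a.val) * (ζ ^ a.val) ^ N =
      e * fakeDegree e t N := by
    rcases hN.lt_or_eq with hlt | rfl
    · exact sum_molienKernel_mul_pow hζ hte hlt
    · rw [fakeDegree, Nat.sub_self, add_comm]
      simpa [fakeDegree, pow_right_comm ζ _ N, hζ.pow_eq_one] using
        sum_molienKernel_mul_pow hζ hte (NeZero.pos N)
  have hneg : ∑ a : ZMod e, molienKernel e t (ζ ^ a.val) * ((ζ ^ a.val) ^ N)⁻¹ =
      e * fakeDegree e t N := by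
    rw [← hpos, ← Equiv.sum_comp (Equiv.neg (ZMod e))]
    refine Finset.sum_congr rfl fun a _ => ?_
    rw [Equiv.neg_apply, pow_val_neg hζ.pow_eq_one, inv_pow, inv_inv, molienKernel, molienKernel,
      inv_inv, mul_comm (t - (ζ ^ a.val)⁻¹)]
  simp only [mul_add, Finset.sum_add_distrib, hpos, hneg]
  ring

lemma pow_add_inv_mul_pow_add_inv {x : K} (hx : x ≠ 0) (n n' : ℕ) :
    (x ^ n + (x ^ n)⁻¹) * (x ^ n' + (x ^ n')⁻¹) =
      (x ^ (n + n') + (x ^ (n + n'))⁻¹) +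
        (x ^ (max n n' - min n n') + (x ^ (max n n' - min n n'))⁻¹) := by
  wlog hle : n' ≤ n generalizing n n'
  · rw [mul_comm, this n' n (by omega), add_comm n, max_comm, min_comm]
  obtain ⟨d, rfl⟩ := Nat.exists_eq_add_of_le hle
  rw [max_eq_left hle, min_eq_right hle, Nat.add_sub_cancel_left]
  field_simp
  ring

lemma sum_molienKernel_mul_mul (hζ : IsPrimitiveRoot ζ e) {t : K} (hte : t ^ e ≠ 1) {n n' : ℕ}
    (hn : n + n' ≤ e) :
    ∑ a : ZMod e, molienKernel e t (ζ ^ a.val) *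
        (((ζ ^ a.val) ^ n + ((ζ ^ a.val) ^ n)⁻¹) * ((ζ ^ a.val) ^ n' + ((ζ ^ a.val) ^ n')⁻¹)) =
      2 * e * (fakeDegree e t (n + n') + fakeDegree e t (max n n' - min n n')) := by
  simp only [pow_add_inv_mul_pow_add_inv (pow_val_ne_zero hζ.pow_eq_one _)]
  rw [mul_add, ← sum_molienKernel_mul_add_inv hζ hte hn,
    ← sum_molienKernel_mul_add_inv hζ hte (by omega : max n n' - min n n' ≤ e),
    ← Finset.sum_add_distrib]
  exact Finset.sum_congr rfl fun a _ => mul_add _ _ _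

end MolienSums

lemma two_mul_dihedralExp_le (e i : ℕ) : 2 * dihedralExp e i ≤ e := by
  unfold dihedralExp
  split_ifs <;> omega

lemma dihedralExp_of_reflCoeff_ne_zero {e i : ℕ} (h : reflCoeff e i ≠ 0) :
    dihedralExp e i = 0 ∨ 2 * dihedralExp e i = e := by
  have hi : i = 0 ∨ e ≤ 2 * i := by
    by_contra! hlt
    exact h (by rw [reflCoeff, if_neg (by omega), if_pos hlt.2])
  unfold dihedralExp
  split_ifs <;> omega

section Omega

variable {e : ℕ} [NeZero e] {ζ : ℂ}

lemma sum_reflCoeff_mul_pow (hζ : IsPrimitiveRoot ζ e) (i j : ℕ) :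
    ∑ a : ZMod e, (reflCoeff e i * (ζ ^ a.val) ^ dihedralExp e i) *
        (reflCoeff e j * (ζ ^ a.val) ^ dihedralExp e j) =
      e * (reflCoeff e i * reflCoeff e j *
        if dihedralExp e i = dihedralExp e j then 1 else 0) := by
  have hterm (a : ZMod e) : (reflCoeff e i * (ζ ^ a.val) ^ dihedralExp e i) *
        (reflCoeff e j * (ζ ^ a.val) ^ dihedralExp e j) =
      reflCoeff e i * reflCoeff e j * (ζ ^ (dihedralExp e i + dihedralExp e j)) ^ a.val := by
    rw [pow_right_comm, pow_add]
    ring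
  simp only [hterm]
  rw [← Finset.mul_sum, sum_pow_val (by rw [pow_right_comm, hζ.pow_eq_one, one_pow])]
  by_cases hs : reflCoeff e i * reflCoeff e j = 0
  · simp [hs]
  have hi := dihedralExp_of_reflCoeff_ne_zero (left_ne_zero_of_mul hs)
  have hj := dihedralExp_of_reflCoeff_ne_zero (right_ne_zero_of_mul hs)
  have hone : ζ ^ (dihedralExp e i + dihedralExp e j) = 1 ↔ dihedralExp e i = dihedralExp e j := by
    rw [hζ.pow_eq_one_iff_dvd]
    constructor
    · intro hdvd
      by_contra hne
      have := Nat.le_of_dvd (by omega) hdvd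
      omega
    · intro heq
      rcases hj with hj | hj
      · simp [heq, hj]
      · rw [heq, ← two_mul, hj]
  simp only [hone]
  split_ifs <;> ring

/-- The closed form of the entry `ω_{i,j}` of the right-hand side of the matrix equation for the
dihedral group. -/
noncomputable def dihedralOmega (e : ℕ) (t : ℂ) (i j : ℕ) : ℂ :=
  t ^ e * (rotCoeff e i * rotCoeff e j *
      (fakeDegree e t (dihedralExp e i + dihedralExp e j) +
        fakeDegree e t (max (dihedralExp e i) (dihedralExp e j) -
          min (dihedralExp e i) (dihedralExp e j))) +
    (t ^ e - 1) / 2 * (reflCoeff e i * reflCoeff e j *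
      if dihedralExp e i = dihedralExp e j then 1 else 0))

lemma Rq_dihedral (hp : e ∣ e) (hζ : ζ ^ e = 1) {t : ℂ} (ht2 : t ^ 2 ≠ 1) (f : Wt e 2 → ℂ) :
    Rq e e 1 2 hp ζ t 0 (fun w => f w * starRingEnd ℂ (refMat e 2 ζ w).det) =
      (2 * (e : ℂ))⁻¹ * (∑ a, molienKernel e t (ζ ^ a.val) * f (rotElt a) +
        (t ^ e - 1) * ∑ a, f (reflElt a)) := by
  have hrot (a : ZMod e) : molienKernel e t (ζ ^ a.val) * f (rotElt a) =
      (t ^ 2 - 1) * (t ^ e - 1) *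
        (f (rotElt a) / ((t - ζ ^ a.val) * (t - (ζ ^ a.val)⁻¹))) := by
    rw [molienKernel]
    ring
  have hrefl : (t ^ e - 1) * ∑ a, f (reflElt a) =
      (t ^ 2 - 1) * (t ^ e - 1) * ∑ a, f (reflElt a) / (t ^ 2 - 1) := by
    rw [← Finset.sum_div, mul_right_comm, mul_div_cancel₀ _ (sub_ne_zero.2 ht2), mul_comm]
  rw [Rq, sum_inCoset_zero, card_Wgrp, hrefl]
  simp only [hrot, det_refMat_rotElt hζ, det_refMat_reflElt hζ, det_smul_one_sub_refMat_rotElt hζ,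
    det_smul_one_sub_refMat_reflElt hζ, map_one, map_neg, one_mul, mul_one, neg_mul, mul_neg,
    neg_neg, pow_zero, Nat.add_one_sub_one, Finset.Icc_self, Finset.prod_singleton,
    ← Finset.mul_sum]
  push_cast
  ring

theorem pow_Nstar_mul_Rq_charExt_mul_charExt (hp : e ∣ e) (hζ : IsPrimitiveRoot ζ e) {t : ℂ}
    (hte : t ^ e ≠ 1) (ht2 : t ^ 2 ≠ 1) {m : ZMod e → ℕ} (hmn : ∀ k, 2 ≤ m k)
    (hm : ∀ k, m (k + ((1 : ℕ) : ZMod e)) = m k) {i j : ℕ} (hi : i < dihedralK e + 2)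
    (hj : j < dihedralK e + 2) :
    t ^ Nstar e e 2 hp ζ *
        Rq e e 1 2 hp ζ t 0 (fun w =>
          charExt e 2 1 m hm ζ (dihedralIdx e i).1 (dihedralIdx e i).2 w *
            charExt e 2 1 m hm ζ (dihedralIdx e j).1 (dihedralIdx e j).2 w *
            starRingEnd ℂ (refMat e 2 ζ w).det) =
      dihedralOmega e t i j := by
  have he : (e : ℂ) ≠ 0 := Nat.cast_ne_zero.2 (NeZero.ne e)
  have hrot := sum_molienKernel_mul_mul hζ hte (n := dihedralExp e i) (n' := dihedralExp e j)
    (by linarith [two_mul_dihedralExp_le e i, two_mul_dihedralExp_le e j])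
  have hrefl := sum_reflCoeff_mul_pow hζ i j
  rw [Nstar_dihedral hp hζ, Rq_dihedral hp hζ.pow_eq_one ht2, dihedralOmega]
  simp only [charExt_dihedralIdx hm hmn hζ hi, charExt_dihedralIdx hm hmn hζ hj, hrefl,
    mul_mul_mul_comm (rotCoeff e i), mul_left_comm _ (rotCoeff e i * rotCoeff e j)]
  rw [← Finset.mul_sum, hrot]
  field_simp

end Omega

/-- `P` and `Λ` are matrices indexed by `{0, …, K + 1}` satisfying `P Λ ᵗP = Ω`, where `P` is block
lower triangular and `Λ` block diagonal for the blocks `{0}`, `{1, …, K}`, `{K + 1}`, and the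
diagonal blocks of `P` are the scalar matrices `a`, `b`, `c`. -/
structure IsBlockSolution {R : Type*} [CommRing R] (K : ℕ) (a b c : R) (P Λ Ω : ℕ → ℕ → R) :
    Prop where
  diag_zero : P 0 0 = a
  diag_mid : ∀ i, 0 < i → i ≤ K → P i i = b
  diag_last : P (K + 1) (K + 1) = c
  offDiag : ∀ i j, i ≤ K → 0 < j → j ≤ K + 1 → i ≠ j → P i j = 0
  zero_right : ∀ j, 0 < j → j ≤ K + 1 → Λ 0 j = 0
  zero_left : ∀ i, 0 < i → i ≤ K + 1 → Λ i 0 = 0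
  last_right : ∀ j, j ≤ K → Λ (K + 1) j = 0
  last_left : ∀ i, i ≤ K → Λ i (K + 1) = 0
  equation : ∀ i < K + 2, ∀ j < K + 2,
    ∑ i' ∈ Finset.range (K + 2), ∑ j' ∈ Finset.range (K + 2), P i i' * Λ i' j' * P j j' = Ω i j

lemma sum_range_add_two {M : Type*} [AddCommMonoid M] (f : ℕ → M) (K : ℕ) :
    ∑ i ∈ Finset.range (K + 2), f i = f 0 + ∑ i ∈ Finset.Icc 1 K, f i + f (K + 1) := by
  rw [Finset.sum_range_succ, Finset.sum_range_eq_add_Ico _ K.succ_pos]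
  rfl

namespace IsBlockSolution

variable {R : Type*} [CommRing R] {K : ℕ} {a b c : R} {P Λ Ω : ℕ → ℕ → R}

lemma sum_zero_row_mul (h : IsBlockSolution K a b c P Λ Ω) (f : ℕ → R) :
    ∑ j ∈ Finset.range (K + 2), P 0 j * f j = a * f 0 := by
  rw [Finset.sum_eq_single_of_mem 0 (Finset.mem_range.2 (by omega)), h.diag_zero]
  intro j hj hj₀
  rw [h.offDiag 0 j K.zero_le (by omega) (by linarith [Finset.mem_range.1 hj]) hj₀.symm, zero_mul]

lemma sum_mid_row_mul (h : IsBlockSolution K a b c P Λ Ω) {i : ℕ} (hi₀ : 0 < i) (hi : i ≤ K)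
    (f : ℕ → R) :
    ∑ j ∈ Finset.range (K + 2), P i j * f j = P i 0 * f 0 + b * f i := by
  rw [Finset.sum_eq_add_of_mem 0 i (Finset.mem_range.2 (by omega))
    (Finset.mem_range.2 (by omega)) hi₀.ne, h.diag_mid i hi₀ hi]
  intro j hj ⟨hj₀, hji⟩
  rw [h.offDiag i j hi (by omega) (by linarith [Finset.mem_range.1 hj]) hji.symm, zero_mul]

lemma sum_last_row_mul (h : IsBlockSolution K a b c P Λ Ω) (f : ℕ → R) :
    ∑ j ∈ Finset.range (K + 2), P (K + 1) j * f j =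
      P (K + 1) 0 * f 0 + ∑ j ∈ Finset.Icc 1 K, P (K + 1) j * f j + c * f (K + 1) := by
  rw [sum_range_add_two, h.diag_last]

lemma sum_mul_sum (h : IsBlockSolution K a b c P Λ Ω) {i j : ℕ} (hi : i < K + 2)
    (hj : j < K + 2) :
    ∑ i' ∈ Finset.range (K + 2), P i i' * ∑ j' ∈ Finset.range (K + 2), P j j' * Λ i' j' =
      Ω i j := by
  rw [← h.equation i hi j hj]
  refine Finset.sum_congr rfl fun i' _ => ?_
  rw [Finset.mul_sum]
  exact Finset.sum_congr rfl fun j' _ => by ring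

lemma omega_zero (h : IsBlockSolution K a b c P Λ Ω) {i : ℕ} (hi : i < K + 2) :
    Ω i 0 = P i 0 * Λ 0 0 * a := by
  rw [← h.sum_mul_sum hi (by omega)]
  simp only [h.sum_zero_row_mul]
  rw [Finset.sum_eq_single_of_mem 0 (Finset.mem_range.2 (by omega))]
  · ring
  · intro j hj hj₀
    rw [h.zero_left j (by omega) (by linarith [Finset.mem_range.1 hj]), mul_zero, mul_zero]

lemma omega_mid_mid (h : IsBlockSolution K a b c P Λ Ω) {i j : ℕ} (hi₀ : 0 < i) (hi : i ≤ K)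
    (hj₀ : 0 < j) (hj : j ≤ K) :
    Ω i j = P i 0 * Λ 0 0 * P j 0 + b ^ 2 * Λ i j := by
  rw [← h.sum_mul_sum (by omega) (by omega)]
  simp only [h.sum_mid_row_mul hi₀ hi, h.sum_mid_row_mul hj₀ hj,
    h.zero_right j hj₀ (by omega), h.zero_left i hi₀ (by omega)]
  ring

lemma omega_last_mid (h : IsBlockSolution K a b c P Λ Ω) {j : ℕ} (hj₀ : 0 < j) (hj : j ≤ K) :
    Ω (K + 1) j =
      P (K + 1) 0 * Λ 0 0 * P j 0 + (∑ i ∈ Finset.Icc 1 K, P (K + 1) i * Λ i j) * b := by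
  have hmid : ∑ i ∈ Finset.Icc 1 K, P (K + 1) i * (P j 0 * Λ i 0 + b * Λ i j) =
      (∑ i ∈ Finset.Icc 1 K, P (K + 1) i * Λ i j) * b := by
    rw [Finset.sum_mul]
    refine Finset.sum_congr rfl fun i hi => ?_
    obtain ⟨hi₀, hi⟩ := Finset.mem_Icc.1 hi
    rw [h.zero_left i hi₀ (by omega)]
    ring
  rw [← h.sum_mul_sum (by omega) (by omega), h.sum_last_row_mul]
  simp only [h.sum_mid_row_mul hj₀ hj, hmid, h.zero_right j hj₀ (by omega),
    h.zero_left (K + 1) (by omega) le_rfl, h.last_right j hj]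
  ring

lemma omega_last_last (h : IsBlockSolution K a b c P Λ Ω) :
    Ω (K + 1) (K + 1) = P (K + 1) 0 ^ 2 * Λ 0 0 +
      (∑ j ∈ Finset.Icc 1 K, P (K + 1) j * ∑ i ∈ Finset.Icc 1 K, P (K + 1) i * Λ i j) +
        c ^ 2 * Λ (K + 1) (K + 1) := by
  have hmid : ∑ i ∈ Finset.Icc 1 K, P (K + 1) i * (P (K + 1) 0 * Λ i 0 +
        ∑ j ∈ Finset.Icc 1 K, P (K + 1) j * Λ i j + c * Λ i (K + 1)) =
      ∑ j ∈ Finset.Icc 1 K, P (K + 1) j * ∑ i ∈ Finset.Icc 1 K, P (K + 1) i * Λ i j := by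
    simp only [Finset.mul_sum]
    rw [Finset.sum_comm]
    refine Finset.sum_congr rfl fun i hi => ?_
    obtain ⟨hi₀, hi⟩ := Finset.mem_Icc.1 hi
    rw [h.zero_left i hi₀ (by omega), h.last_left i hi, mul_zero, mul_zero, add_zero, zero_add,
      Finset.mul_sum]
    exact Finset.sum_congr rfl fun j _ => mul_left_comm _ _ _
  have hzero : ∑ j ∈ Finset.Icc 1 K, P (K + 1) j * Λ 0 j = 0 :=
    Finset.sum_eq_zero fun j hj => by
      obtain ⟨hj₀, hj⟩ := Finset.mem_Icc.1 hj
      rw [h.zero_right j hj₀ (by omega), mul_zero]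
  have hlast : ∑ j ∈ Finset.Icc 1 K, P (K + 1) j * Λ (K + 1) j = 0 :=
    Finset.sum_eq_zero fun j hj => by rw [h.last_right j (Finset.mem_Icc.1 hj).2, mul_zero]
  rw [← h.sum_mul_sum (by omega) (by omega)]
  simp only [h.sum_last_row_mul, hmid, hzero, hlast, h.zero_left (K + 1) (by omega) le_rfl,
    h.last_left 0 K.zero_le]
  ring

end IsBlockSolution

section GreenSystem

variable {R : Type*} [CommRing R] {h : ℕ} {x y u : ℕ → R}

lemma sum_mul_green_of_forall_lt {k j : ℕ} (hk₀ : 0 < k) (hk : k ≤ h) (hkj : k ≤ j)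
    (hjk : j ≤ k + 1) (hu : ∀ a, 0 < a → a < k → u a = 0) :
    ∑ a ∈ Finset.Icc 1 h, u a * (x (min a j) * y (max a j)) =
      u k * (x k * y j) + x j * ∑ a ∈ Finset.Ioc k h, u a * y a := by
  have hsub : Finset.Icc k h ⊆ Finset.Icc 1 h := Finset.Icc_subset_Icc_left hk₀
  rw [← Finset.sum_subset hsub, ← Finset.add_sum_Ioc_eq_sum_Icc hk, min_eq_left hkj,
    max_eq_right hkj, Finset.mul_sum]
  · congr 1
    refine Finset.sum_congr rfl fun a ha => ?_
    have hja : j ≤ a := by linarith [(Finset.mem_Ioc.1 ha).1]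
    rw [min_eq_right hja, max_eq_left hja, mul_left_comm]
  · intro a ha hak
    rw [Finset.mem_Icc] at ha hak
    rw [hu a (by omega) (by omega), zero_mul]

theorem eq_zero_of_sum_mul_green_eq_zero [NoZeroDivisors R]
    (hx : ∀ k, 0 < k → k ≤ h → x k ≠ 0) (hy : y h ≠ 0)
    (hxy : ∀ k, 0 < k → k < h → y k * x (k + 1) - x k * y (k + 1) ≠ 0)
    (hsum : ∀ j, 0 < j → j ≤ h →
      ∑ a ∈ Finset.Icc 1 h, u a * (x (min a j) * y (max a j)) = 0)
    {k : ℕ} (hk₀ : 0 < k) (hk : k ≤ h) : u k = 0 := by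
  induction k using Nat.strong_induction_on with
  | _ k ih =>
    have hu (a : ℕ) (ha₀ : 0 < a) (ha : a < k) : u a = 0 := ih a ha ha₀ (ha.le.trans hk)
    have hself := hsum k hk₀ hk
    rw [sum_mul_green_of_forall_lt hk₀ hk le_rfl k.le_succ hu] at hself
    rcases hk.lt_or_eq with hlt | rfl
    · have hnext := hsum (k + 1) k.succ_pos hlt
      rw [sum_mul_green_of_forall_lt hk₀ hk k.le_succ le_rfl hu] at hnext
      have hmul : u k * (x k * (y k * x (k + 1) - x k * y (k + 1))) = 0 := by
        linear_combination x (k + 1) * hself - x k * hnext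
      exact (mul_eq_zero.1 hmul).resolve_right (mul_ne_zero (hx k hk₀ hk) (hxy k hk₀ hlt))
    · rw [Finset.Ioc_self, Finset.sum_empty, mul_zero, add_zero] at hself
      exact (mul_eq_zero.1 hself).resolve_right (mul_ne_zero (hx k hk₀ le_rfl) hy)

end GreenSystem

section FakeDegree

variable {R : Type*} [CommRing R] {e : ℕ}

lemma fakeDegree_zero (e : ℕ) (t : R) : fakeDegree e t 0 = 1 + t ^ e := by
  rw [fakeDegree, pow_zero, Nat.sub_zero]

theorem pow_mul_fakeDegree_add_sub_mul (t : R) {a b : ℕ} (ha : 2 * a ≤ e) (hb : 2 * b ≤ e) :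
    t ^ e * (fakeDegree e t (a + b) + fakeDegree e t (max a b - min a b)) -
        fakeDegree e t a * fakeDegree e t b =
      (t ^ e - 1) * (t ^ min a b * fakeDegree e t (max a b)) := by
  wlog hab : a ≤ b generalizing a b
  · rw [max_comm, min_comm, add_comm a b, mul_comm (fakeDegree e t a), this hb ha (by omega)]
  rw [max_eq_right hab, min_eq_left hab]
  obtain ⟨d, rfl⟩ := Nat.exists_eq_add_of_le hab
  obtain ⟨f, rfl⟩ := Nat.exists_eq_add_of_le hb
  simp only [fakeDegree, Nat.add_sub_cancel_left, show 2 * (a + d) + f - (a + (a + d)) = d + f by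
    omega, show 2 * (a + d) + f - d = 2 * a + d + f by omega, show 2 * (a + d) + f - a =
    a + 2 * d + f by omega, show 2 * (a + d) + f - (a + d) = a + d + f by omega]
  ring

lemma fakeDegree_mul_pow_sub_pow_mul_fakeDegree (t : R) {k : ℕ} (hk : k < e) :
    fakeDegree e t k * t ^ (k + 1) - t ^ k * fakeDegree e t (k + 1) =
      t ^ (e - 1) * (t ^ 2 - 1) := by
  obtain ⟨f, rfl⟩ := Nat.exists_eq_add_of_le (Nat.succ_le_of_lt hk)
  rw [fakeDegree, fakeDegree, show k.succ + f - k = f + 1 by omega,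
    show k.succ + f - (k + 1) = f by omega, show k.succ + f - 1 = k + f by omega]
  ring

end FakeDegree

section MiddleBlock

variable {e : ℕ} {t : ℂ}

lemma fakeDegree_half_ne_zero (e : ℕ) (ht0 : t ≠ 0) (ht2 : t ^ 2 ≠ 1) :
    fakeDegree e t (e / 2) ≠ 0 := by
  obtain ⟨h, rfl | rfl⟩ := e.even_or_odd'
  · rw [fakeDegree, show 2 * h / 2 = h by omega, show 2 * h - h = h by omega, ← two_mul]
    exact mul_ne_zero two_ne_zero (pow_ne_zero _ ht0)
  · rw [fakeDegree, show (2 * h + 1) / 2 = h by omega, show 2 * h + 1 - h = h + 1 by omega,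
      pow_succ, ← mul_one_add]
    refine mul_ne_zero (pow_ne_zero _ ht0) fun hneg => ht2 ?_
    rw [← neg_eq_of_add_eq_zero_right hneg, neg_one_sq]

lemma eq_zero_of_sum_mul_pow_mul_fakeDegree_eq_zero {u : ℕ → ℂ} (ht0 : t ≠ 0) (ht2 : t ^ 2 ≠ 1)
    (hsum : ∀ j, 0 < j → j ≤ e / 2 →
      ∑ a ∈ Finset.Icc 1 (e / 2), u a * (t ^ min a j * fakeDegree e t (max a j)) = 0)
    {k : ℕ} (hk₀ : 0 < k) (hk : k ≤ e / 2) : u k = 0 := by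
  refine eq_zero_of_sum_mul_green_eq_zero (x := (t ^ ·)) (fun _ _ _ => pow_ne_zero _ ht0)
    (fakeDegree_half_ne_zero e ht0 ht2) (fun i _ hi => ?_) hsum hk₀ hk
  rw [fakeDegree_mul_pow_sub_pow_mul_fakeDegree t (by omega)]
  exact mul_ne_zero (pow_ne_zero _ ht0) (sub_ne_zero.2 ht2)

/-- The entries of `t² (tᵉ - 1)⁻¹ Λ_{22}`, where `Λ_{22}` is the block of `Λ` belonging to the
characters other than `ε` and `1`. -/
noncomputable def middleKernel (e : ℕ) (t : ℂ) (i j : ℕ) : ℂ :=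
  rotCoeff e i * rotCoeff e j * (t ^ min (dihedralExp e i) (dihedralExp e j) *
      fakeDegree e t (max (dihedralExp e i) (dihedralExp e j))) +
    t ^ e / 2 * (reflCoeff e i * reflCoeff e j *
      if dihedralExp e i = dihedralExp e j then 1 else 0)

lemma middleKernel_of_two_mul_lt {i : ℕ} (hi₀ : 0 < i) (hi : 2 * i < e) (j : ℕ) :
    middleKernel e t i j = rotCoeff e j *
      (t ^ min i (dihedralExp e j) * fakeDegree e t (max i (dihedralExp e j))) := by
  obtain ⟨hexp, hrot, hrefl⟩ := dihedral_coeffs_of_two_mul_lt hi₀ hi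
  rw [middleKernel, hexp, hrot, hrefl, one_mul, zero_mul, zero_mul, mul_zero, add_zero]

lemma sum_mul_middleKernel_of_even {h : ℕ} (he : e = 2 * (h + 1)) (u : ℕ → ℂ) (j : ℕ) :
    ∑ a ∈ Finset.Icc 1 (h + 2), u a * middleKernel e t a j =
      rotCoeff e j * (∑ a ∈ Finset.Icc 1 h, u a *
          (t ^ min a (dihedralExp e j) * fakeDegree e t (max a (dihedralExp e j))) +
        (u (h + 1) + u (h + 2)) / 2 * (t ^ min (h + 1) (dihedralExp e j) *
          fakeDegree e t (max (h + 1) (dihedralExp e j)))) +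
      t ^ e / 2 * (reflCoeff e j * (u (h + 1) - u (h + 2)) *
        if h + 1 = dihedralExp e j then 1 else 0) := by
  obtain ⟨hexp, hrot, hrefl⟩ :=
    dihedral_coeffs_of_two_mul_eq (e := e) (i := h + 1) (by omega) he.symm
  obtain ⟨hexp', hrot', hrefl'⟩ :=
    dihedral_coeffs_of_two_mul_eq_add_two (e := e) (i := h + 2) (by omega)
  have hlow : ∑ a ∈ Finset.Icc 1 h, u a * middleKernel e t a j =
      rotCoeff e j * ∑ a ∈ Finset.Icc 1 h, u a *
        (t ^ min a (dihedralExp e j) * fakeDegree e t (max a (dihedralExp e j))) := by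
    rw [Finset.mul_sum]
    refine Finset.sum_congr rfl fun a ha => ?_
    obtain ⟨ha₀, ha⟩ := Finset.mem_Icc.1 ha
    rw [middleKernel_of_two_mul_lt ha₀ (by omega), mul_left_comm]
  rw [Finset.sum_Icc_succ_top (by omega), Finset.sum_Icc_succ_top (by omega), hlow, middleKernel,
    middleKernel, hexp, hrot, hrefl, hexp', hrot', hrefl', show h + 2 - 1 = h + 1 from rfl]
  ring

lemma eq_zero_of_sum_mul_middleKernel_eq_zero_of_odd {u : ℕ → ℂ} (ht0 : t ≠ 0)
    (ht2 : t ^ 2 ≠ 1) (he : Odd e)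
    (hsum : ∀ j, 0 < j → j ≤ e / 2 →
      ∑ a ∈ Finset.Icc 1 (e / 2), u a * middleKernel e t a j = 0)
    {k : ℕ} (hk₀ : 0 < k) (hk : k ≤ e / 2) : u k = 0 := by
  have hlt {i : ℕ} (hi : i ≤ e / 2) : 2 * i < e := by obtain ⟨h, rfl⟩ := he; omega
  refine eq_zero_of_sum_mul_pow_mul_fakeDegree_eq_zero ht0 ht2 (fun j hj₀ hj => ?_) hk₀ hk
  obtain ⟨hexp, hrot, -⟩ := dihedral_coeffs_of_two_mul_lt hj₀ (hlt hj)
  rw [← hsum j hj₀ hj]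
  refine Finset.sum_congr rfl fun a ha => ?_
  obtain ⟨ha₀, ha⟩ := Finset.mem_Icc.1 ha
  rw [middleKernel_of_two_mul_lt ha₀ (hlt ha), hexp, hrot, one_mul]

lemma eq_zero_of_sum_mul_middleKernel_eq_zero_of_even {u : ℕ → ℂ} (ht0 : t ≠ 0)
    (ht2 : t ^ 2 ≠ 1) {h : ℕ} (he : e = 2 * (h + 1))
    (hsum : ∀ j, 0 < j → j ≤ h + 2 →
      ∑ a ∈ Finset.Icc 1 (h + 2), u a * middleKernel e t a j = 0)
    {k : ℕ} (hk₀ : 0 < k) (hk : k ≤ h + 2) : u k = 0 := by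
  obtain ⟨hexp, hrot, hrefl⟩ :=
    dihedral_coeffs_of_two_mul_eq (e := e) (i := h + 1) (by omega) he.symm
  obtain ⟨hexp', hrot', hrefl'⟩ :=
    dihedral_coeffs_of_two_mul_eq_add_two (e := e) (i := h + 2) (by omega)
  have hhalf : e / 2 = h + 1 := by omega
  simp only [sum_mul_middleKernel_of_even he] at hsum
  have hplus := hsum (h + 1) (by omega) (by omega)
  have hminus := hsum (h + 2) (by omega) le_rfl
  rw [hexp, hrot, hrefl, if_pos rfl] at hplus
  rw [hexp', hrot', hrefl', show h + 2 - 1 = h + 1 from rfl, if_pos rfl] at hminus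
  have heq : u (h + 2) = u (h + 1) := by
    refine mul_left_cancel₀ (pow_ne_zero e ht0) ?_
    linear_combination hminus - hplus
  have hgreen {i : ℕ} (hi₀ : 0 < i) (hi : i ≤ h + 1) : u i = 0 := by
    refine eq_zero_of_sum_mul_pow_mul_fakeDegree_eq_zero (e := e) ht0 ht2 (fun j hj₀ hj => ?_) hi₀
      (hi.trans_eq hhalf.symm)
    rw [hhalf] at hj ⊢
    rw [Finset.sum_Icc_succ_top (by omega)]
    rcases hj.lt_or_eq with hlt | rfl
    · obtain ⟨hexpj, hrotj, hreflj⟩ := dihedral_coeffs_of_two_mul_lt (e := e) hj₀ (by omega)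
      have hsumj := hsum j hj₀ (by omega)
      rw [hexpj, hrotj, hreflj, heq] at hsumj
      linear_combination hsumj
    · rw [heq] at hplus
      linear_combination 2 * hplus
  rcases hk.lt_or_eq with hlt | rfl
  · exact hgreen hk₀ (by omega)
  · rw [heq, hgreen h.succ_pos le_rfl]

theorem eq_zero_of_sum_mul_middleKernel_eq_zero {u : ℕ → ℂ} (he₀ : 0 < e) (ht0 : t ≠ 0)
    (ht2 : t ^ 2 ≠ 1)
    (hsum : ∀ j, 0 < j → j ≤ dihedralK e →
      ∑ a ∈ Finset.Icc 1 (dihedralK e), u a * middleKernel e t a j = 0)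
    {k : ℕ} (hk₀ : 0 < k) (hk : k ≤ dihedralK e) : u k = 0 := by
  have hK := two_mul_dihedralK_add_one e
  rcases Nat.even_or_odd e with he | he
  · rw [if_pos he] at hK
    obtain ⟨h, heh⟩ : ∃ h, e = 2 * (h + 1) := ⟨e / 2 - 1, by obtain ⟨h, rfl⟩ := he; omega⟩
    rw [show dihedralK e = h + 2 by omega] at hsum hk
    exact eq_zero_of_sum_mul_middleKernel_eq_zero_of_even ht0 ht2 heh hsum hk₀ hk
  · rw [if_neg (Nat.not_even_iff_odd.2 he)] at hK
    rw [show dihedralK e = e / 2 by obtain ⟨h, rfl⟩ := he; omega] at hsum hk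
    exact eq_zero_of_sum_mul_middleKernel_eq_zero_of_odd ht0 ht2 he hsum hk₀ hk

end MiddleBlock

section Solution

variable {e : ℕ} {t : ℂ}

lemma dihedralExp_pos {i : ℕ} (he : 0 < e) (hi₀ : 0 < i) (hi : i ≤ dihedralK e) :
    0 < dihedralExp e i := by
  rcases dihedral_index_cases (e := e) (i := i) (by omega) with h | ⟨-, h⟩ | h | h | h
  · omega
  · rwa [(dihedral_coeffs_of_two_mul_lt hi₀ h).1]
  · rwa [(dihedral_coeffs_of_two_mul_eq hi₀ h).1]
  · rw [(dihedral_coeffs_of_two_mul_eq_add_two h).1]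
    omega
  · omega

lemma dihedralOmega_comm (e : ℕ) (t : ℂ) (i j : ℕ) :
    dihedralOmega e t i j = dihedralOmega e t j i := by
  simp only [dihedralOmega, add_comm (dihedralExp e i), max_comm (dihedralExp e i),
    min_comm (dihedralExp e i), eq_comm (a := dihedralExp e i), mul_comm (rotCoeff e i),
    mul_comm (reflCoeff e i)]

lemma dihedralOmega_of_exp_eq_zero_right {i j : ℕ} (hi : 0 < dihedralExp e i)
    (hj : dihedralExp e j = 0) (hrot : rotCoeff e j = 1 / 2) :
    dihedralOmega e t i j = rotCoeff e i * fakeDegree e t (dihedralExp e i) * t ^ e := by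
  rw [dihedralOmega, hj, hrot, if_neg hi.ne', add_zero, Nat.max_zero, Nat.min_zero, Nat.sub_zero]
  ring

lemma dihedralOmega_of_exp_eq_zero {i j : ℕ} (hi : dihedralExp e i = 0)
    (hroti : rotCoeff e i = 1 / 2) (hj : dihedralExp e j = 0) (hrotj : rotCoeff e j = 1 / 2) :
    dihedralOmega e t i j =
      t ^ e * ((1 + t ^ e) / 2 + reflCoeff e i * reflCoeff e j * ((t ^ e - 1) / 2)) := by
  rw [dihedralOmega, hi, hj, hroti, hrotj, if_pos rfl, add_zero, max_self, min_self, Nat.sub_zero,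
    fakeDegree_zero]
  ring

lemma dihedralOmega_sub_mul (t : ℂ) (i j : ℕ) :
    dihedralOmega e t i j - rotCoeff e i * fakeDegree e t (dihedralExp e i) *
        (rotCoeff e j * fakeDegree e t (dihedralExp e j)) =
      (t ^ e - 1) * middleKernel e t i j := by
  rw [dihedralOmega, middleKernel]
  linear_combination rotCoeff e i * rotCoeff e j * pow_mul_fakeDegree_add_sub_mul t
    (two_mul_dihedralExp_le e i) (two_mul_dihedralExp_le e j)

lemma rotCoeff_mul_fakeDegree {i : ℕ} (he : 0 < e) (t : ℂ) (hi₀ : 0 < i) (hi : i ≤ dihedralK e) :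
    rotCoeff e i * fakeDegree e t (dihedralExp e i) =
      if Even e ∧ (i = e / 2 ∨ i = e / 2 + 1) then t ^ (e / 2) else t ^ i + t ^ (e - i) := by
  have hhalf {h : ℕ} (heh : e = 2 * h) : 1 / 2 * fakeDegree e t h = t ^ (e / 2) := by
    rw [fakeDegree, show e - h = h by omega, show e / 2 = h by omega]
    ring
  rcases dihedral_index_cases (e := e) (i := i) (by omega) with h | ⟨-, h⟩ | h | h | h
  · omega
  · obtain ⟨hexp, hrot, -⟩ := dihedral_coeffs_of_two_mul_lt hi₀ h
    rw [hexp, hrot, one_mul, fakeDegree, if_neg]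
    rintro ⟨⟨r, rfl⟩, hr⟩
    omega
  · obtain ⟨hexp, hrot, -⟩ := dihedral_coeffs_of_two_mul_eq hi₀ h
    rw [hexp, hrot, hhalf h.symm, if_pos ⟨⟨i, by omega⟩, by omega⟩]
  · obtain ⟨hexp, hrot, -⟩ := dihedral_coeffs_of_two_mul_eq_add_two h
    rw [hexp, hrot, hhalf (by omega), if_pos ⟨⟨i - 1, by omega⟩, by omega⟩]
  · omega

variable {P Λ : ℕ → ℕ → ℂ}

namespace IsBlockSolution

section

variable (h : IsBlockSolution (dihedralK e) (t ^ e) t 1 P Λ (dihedralOmega e t))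
include h

lemma dihedral_Λ_zero_zero (ht0 : t ≠ 0) : Λ 0 0 = 1 := by
  obtain ⟨hexp, hrot, hrefl⟩ := dihedral_coeffs_zero e
  have hΩ := h.omega_zero (i := 0) (by omega)
  rw [dihedralOmega_of_exp_eq_zero hexp hrot hexp hrot, hrefl, h.diag_zero] at hΩ
  refine mul_left_cancel₀ (pow_ne_zero (e + e) ht0) ?_
  rw [pow_add]
  linear_combination -hΩ

lemma dihedral_P_mid_zero (ht0 : t ≠ 0) (he : 0 < e) {i : ℕ} (hi₀ : 0 < i)
    (hi : i ≤ dihedralK e) :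
    P i 0 = rotCoeff e i * fakeDegree e t (dihedralExp e i) := by
  obtain ⟨hexp, hrot, -⟩ := dihedral_coeffs_zero e
  have hΩ := h.omega_zero (i := i) (by omega)
  rw [dihedralOmega_of_exp_eq_zero_right (dihedralExp_pos he hi₀ hi) hexp hrot,
    h.dihedral_Λ_zero_zero ht0, mul_one] at hΩ
  exact (mul_right_cancel₀ (pow_ne_zero e ht0) hΩ).symm

lemma dihedral_P_last_zero (ht0 : t ≠ 0) : P (dihedralK e + 1) 0 = 1 := by
  obtain ⟨hexp, hrot, hrefl⟩ := dihedral_coeffs_zero e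
  obtain ⟨hexp', hrot', hrefl'⟩ := dihedral_coeffs_last e
  have hΩ := h.omega_zero (i := dihedralK e + 1) (by omega)
  rw [dihedralOmega_of_exp_eq_zero hexp' hrot' hexp hrot, hrefl, hrefl',
    h.dihedral_Λ_zero_zero ht0] at hΩ
  refine mul_right_cancel₀ (pow_ne_zero e ht0) ?_
  linear_combination -hΩ

lemma dihedral_sq_mul_Λ_mid_mid (ht0 : t ≠ 0) (he : 0 < e) {i j : ℕ} (hi₀ : 0 < i)
    (hi : i ≤ dihedralK e) (hj₀ : 0 < j) (hj : j ≤ dihedralK e) :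
    t ^ 2 * Λ i j = (t ^ e - 1) * middleKernel e t i j := by
  rw [← dihedralOmega_sub_mul, h.omega_mid_mid hi₀ hi hj₀ hj, h.dihedral_Λ_zero_zero ht0,
    h.dihedral_P_mid_zero ht0 he hi₀ hi, h.dihedral_P_mid_zero ht0 he hj₀ hj]
  ring

lemma dihedral_mul_Λ_one_mid (ht0 : t ≠ 0) (he : 3 ≤ e) {j : ℕ} (hj₀ : 0 < j)
    (hj : j ≤ dihedralK e) : t * Λ 1 j = (t ^ e - 1) * P j 0 := by
  have hexp : 1 ≤ dihedralExp e j := dihedralExp_pos (by omega) hj₀ hj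
  refine mul_left_cancel₀ ht0 ?_
  rw [← mul_assoc, ← pow_two, h.dihedral_sq_mul_Λ_mid_mid ht0 (by omega) one_pos (by omega) hj₀ hj,
    middleKernel_of_two_mul_lt one_pos (by omega), min_eq_left hexp, max_eq_right hexp,
    h.dihedral_P_mid_zero ht0 (by omega) hj₀ hj]
  ring

lemma dihedral_sum_P_last_mul_Λ (ht0 : t ≠ 0) (he : 3 ≤ e) {j : ℕ} (hj₀ : 0 < j)
    (hj : j ≤ dihedralK e) :
    ∑ i ∈ Finset.Icc 1 (dihedralK e), P (dihedralK e + 1) i * Λ i j = Λ 1 j := by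
  obtain ⟨hexp, hrot, -⟩ := dihedral_coeffs_last e
  have hΩ := h.omega_last_mid hj₀ hj
  rw [dihedralOmega_comm, dihedralOmega_of_exp_eq_zero_right
    (dihedralExp_pos (by omega) hj₀ hj) hexp hrot, h.dihedral_Λ_zero_zero ht0,
    h.dihedral_P_last_zero ht0, ← h.dihedral_P_mid_zero ht0 (by omega) hj₀ hj] at hΩ
  refine mul_right_cancel₀ ht0 ?_
  linear_combination -hΩ - h.dihedral_mul_Λ_one_mid ht0 he hj₀ hj

lemma dihedral_P_last_mid (ht0 : t ≠ 0) (hte : t ^ e ≠ 1) (ht2 : t ^ 2 ≠ 1) (he : 3 ≤ e) {i : ℕ}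
    (hi₀ : 0 < i) (hi : i ≤ dihedralK e) :
    P (dihedralK e + 1) i = if i = 1 then 1 else 0 := by
  refine sub_eq_zero.1 (eq_zero_of_sum_mul_middleKernel_eq_zero (by omega) ht0 ht2
    (u := fun i => P (dihedralK e + 1) i - if i = 1 then 1 else 0) (fun j hj₀ hj => ?_) hi₀ hi)
  have hΛ : ∑ i ∈ Finset.Icc 1 (dihedralK e),
      (P (dihedralK e + 1) i - if i = 1 then 1 else 0) * Λ i j = 0 := by
    simp only [sub_mul, ite_mul, one_mul, zero_mul, Finset.sum_sub_distrib, Finset.sum_ite_eq']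
    rw [if_pos (Finset.mem_Icc.2 ⟨le_rfl, hj₀.trans_le hj⟩),
      h.dihedral_sum_P_last_mul_Λ ht0 he hj₀ hj, sub_self]
  refine (mul_eq_zero.1 ?_).resolve_left (sub_ne_zero.2 hte)
  refine Eq.trans ?_ (mul_eq_zero_of_right (t ^ 2) hΛ)
  rw [Finset.mul_sum, Finset.mul_sum]
  refine Finset.sum_congr rfl fun i hi => ?_
  obtain ⟨hi₀, hi⟩ := Finset.mem_Icc.1 hi
  rw [mul_left_comm, ← h.dihedral_sq_mul_Λ_mid_mid ht0 (by omega) hi₀ hi hj₀ hj, mul_left_comm]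

lemma dihedral_Λ_last_last (ht0 : t ≠ 0) (hte : t ^ e ≠ 1) (ht2 : t ^ 2 ≠ 1) (he : 3 ≤ e) :
    Λ (dihedralK e + 1) (dihedralK e + 1) = t ^ (e - 2) * (t ^ 2 - 1) * (t ^ e - 1) := by
  obtain ⟨hexp, hrot, hrefl⟩ := dihedral_coeffs_last e
  obtain ⟨hexp₁, hrot₁, -⟩ := dihedral_coeffs_of_two_mul_lt one_pos (by omega : 2 * 1 < e)
  have hK : 1 ≤ dihedralK e := by have := lt_two_mul_dihedralK_add_one e; omega
  have hmid : ∑ j ∈ Finset.Icc 1 (dihedralK e), P (dihedralK e + 1) j *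
      ∑ i ∈ Finset.Icc 1 (dihedralK e), P (dihedralK e + 1) i * Λ i j = Λ 1 1 := by
    rw [Finset.sum_eq_single_of_mem 1 (Finset.mem_Icc.2 ⟨le_rfl, hK⟩),
      h.dihedral_P_last_mid ht0 hte ht2 he one_pos hK, if_pos rfl, one_mul,
      h.dihedral_sum_P_last_mul_Λ ht0 he one_pos hK]
    intro j hj hj₁
    obtain ⟨hj₀, hj⟩ := Finset.mem_Icc.1 hj
    rw [h.dihedral_P_last_mid ht0 hte ht2 he hj₀ hj, if_neg hj₁, zero_mul]
  have hΩ := h.omega_last_last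
  rw [dihedralOmega_of_exp_eq_zero hexp hrot hexp hrot, hrefl, hmid, h.dihedral_P_last_zero ht0,
    h.dihedral_Λ_zero_zero ht0] at hΩ
  have hΛ := h.dihedral_mul_Λ_one_mid ht0 he one_pos hK
  rw [h.dihedral_P_mid_zero ht0 (by omega) one_pos hK, hexp₁, hrot₁, fakeDegree] at hΛ
  refine mul_left_cancel₀ ht0 ?_
  obtain ⟨f, rfl⟩ := Nat.exists_eq_add_of_le' (show 2 ≤ e by omega)
  rw [show f + 2 - 1 = f + 1 by omega] at hΛ
  rw [Nat.add_sub_cancel]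
  linear_combination -t * hΩ - hΛ

end

theorem of_dihedralClass {Ω : ℕ → ℕ → ℂ}
    (hPtri : ∀ i < dihedralK e + 2, ∀ j < dihedralK e + 2,
      P i j ≠ 0 → i = j ∨ dihedralClass e j < dihedralClass e i)
    (hPdiag : ∀ i < dihedralK e + 2,
      P i i = t ^ (if i = 0 then e else if i = dihedralK e + 1 then 0 else 1))
    (hΛblock : ∀ i < dihedralK e + 2, ∀ j < dihedralK e + 2,
      dihedralClass e i ≠ dihedralClass e j → Λ i j = 0)
    (hΩ : ∀ i < dihedralK e + 2, ∀ j < dihedralK e + 2,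
      ∑ i' ∈ Finset.range (dihedralK e + 2), ∑ j' ∈ Finset.range (dihedralK e + 2),
        P i i' * Λ i' j' * P j j' = Ω i j) :
    IsBlockSolution (dihedralK e) (t ^ e) t 1 P Λ Ω where
  diag_zero := hPdiag 0 (by omega)
  diag_mid i hi₀ hi := by
    rw [hPdiag i (by omega), if_neg hi₀.ne', if_neg (by omega), pow_one]
  diag_last := by
    rw [hPdiag _ (by omega), if_neg (by omega), if_pos rfl, pow_zero]
  offDiag i j hi hj₀ hj hij := by
    by_contra hP
    have hclass := (hPtri i (by omega) j (by omega) hP).resolve_left hij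
    unfold dihedralClass at hclass
    grind
  zero_right j hj₀ hj := hΛblock 0 (by omega) j (by omega) (by unfold dihedralClass; grind)
  zero_left i hi₀ hi := hΛblock i (by omega) 0 (by omega) (by unfold dihedralClass; grind)
  last_right j hj := hΛblock _ (by omega) j (by omega) (by unfold dihedralClass; grind)
  last_left i hi := hΛblock i (by omega) _ (by omega) (by unfold dihedralClass; grind)
  equation := hΩ

end IsBlockSolution

end Solution

lemma pow_ne_one_of_transcendental {R A : Type*} [CommRing R] [Nontrivial R] [Ring A] [Algebra R A]
    {x : A} (hx : Transcendental R x) {n : ℕ} (hn : 0 < n) : x ^ n ≠ 1 := by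
  intro h
  exact hx (IsAlgebraic.of_pow hn (h ▸ isAlgebraic_one))

theorem statement18_general (e : ℕ) [NeZero e] (he : 3 ≤ e) (hp : e ∣ e)
    (ζ : ℂ) (hζ : IsPrimitiveRoot ζ e) (t : ℂ) (ht0 : t ≠ 0) (hte : t ^ e ≠ 1) (ht2 : t ^ 2 ≠ 1)
    (m : ZMod e → ℕ) (hmn : ∀ k, 2 ≤ m k) (hm : ∀ k, m (k + ((1 : ℕ) : ZMod e)) = m k)
    (P Λ : ℕ → ℕ → ℂ)
    (hPtri : ∀ i < dihedralK e + 2, ∀ i' < dihedralK e + 2,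
      P i i' ≠ 0 → i = i' ∨ dihedralClass e i' < dihedralClass e i)
    (hPdiag : ∀ i < dihedralK e + 2,
      P i i = t ^ (if i = 0 then e else if i = dihedralK e + 1 then 0 else 1))
    (hΛblock : ∀ i < dihedralK e + 2, ∀ i' < dihedralK e + 2,
      dihedralClass e i ≠ dihedralClass e i' → Λ i i' = 0)
    (hPΛP : ∀ i < dihedralK e + 2, ∀ i' < dihedralK e + 2,
      (∑ i₁ ∈ Finset.range (dihedralK e + 2), ∑ i₂ ∈ Finset.range (dihedralK e + 2),
        P i i₁ * Λ i₁ i₂ * P i' i₂) =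
      t ^ Nstar e e 2 hp ζ *
        Rq e e 1 2 hp ζ t 0 (fun w =>
          charExt e 2 1 m hm ζ (dihedralIdx e i).1 (dihedralIdx e i).2 w *
            charExt e 2 1 m hm ζ (dihedralIdx e i').1 (dihedralIdx e i').2 w *
            starRingEnd ℂ (refMat e 2 ζ w).det)) :
    (∀ i, 1 ≤ i → i ≤ dihedralK e →
      P i 0 = if Even e ∧ (i = e / 2 ∨ i = e / 2 + 1) then t ^ (e / 2)
        else t ^ i + t ^ (e - i))
    ∧ (P (dihedralK e + 1) 0 = 1)
    ∧ (P (dihedralK e + 1) 1 = 1)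
    ∧ (∀ i, 2 ≤ i → i ≤ dihedralK e → P (dihedralK e + 1) i = 0)
    ∧ (Λ 0 0 = 1)
    ∧ (∀ i, 1 ≤ i → i ≤ dihedralK e → Λ 1 i = t⁻¹ * (t ^ e - 1) * P i 0)
    ∧ (Λ (dihedralK e + 1) (dihedralK e + 1) = t ^ (e - 2) * (t ^ 2 - 1) * (t ^ e - 1)) := by
  have h : IsBlockSolution (dihedralK e) (t ^ e) t 1 P Λ (dihedralOmega e t) :=
    .of_dihedralClass hPtri hPdiag hΛblock fun i hi j hj => (hPΛP i hi j hj).trans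
      (pow_Nstar_mul_Rq_charExt_mul_charExt hp hζ hte ht2 hmn hm hi hj)
  have hK : 1 ≤ dihedralK e := by have := lt_two_mul_dihedralK_add_one e; omega
  refine ⟨fun i hi₀ hi => ?_, h.dihedral_P_last_zero ht0, ?_, fun i hi₂ hi => ?_,
    h.dihedral_Λ_zero_zero ht0, fun i hi₀ hi => ?_, h.dihedral_Λ_last_last ht0 hte ht2 he⟩
  · rw [h.dihedral_P_mid_zero ht0 (by omega) hi₀ hi, rotCoeff_mul_fakeDegree (by omega) t hi₀ hi]
  · rw [h.dihedral_P_last_mid ht0 hte ht2 he one_pos hK, if_pos rfl]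
  · rw [h.dihedral_P_last_mid ht0 hte ht2 he (by omega) hi, if_neg (by omega)]
  · rw [mul_assoc, ← h.dihedral_mul_Λ_one_mid ht0 he hi₀ hi, inv_mul_cancel_left₀ ht0]

/-- Lemma 5.4, after Geck–Malle.  Let `W = G(e,e,2)` be
the dihedral group of order `2e` and `q = 0`.  Any block lower triangular
solution `P = (p_{z,z'})`, `Λ` of the matrix equation `PΛᵗP = Ω` of (4.3.2)
(diagonal blocks `t^e, tI_k, 1` for the similarity classes `ℱ_1, ℱ_2, ℱ_3`
of `a`-values `e, 1, 0`) is given by: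
`ᵗP_{21} = (t+t^{e-1}, …, t^m+t^{m+1})` (`e = 2m+1`), resp.
`(t+t^{e-1}, …, t^{m-1}+t^{m+1}, t^m, t^m)` (`e = 2m`);
`p_{31} = 1`, `P_{32} = (1,0,…,0)`; and `λ_{11} = 1`,
`(Λ_{22})_1 = t⁻¹(t^e-1)·ᵗP_{21}`, `λ_{33} = t^{e-2}(t^2-1)(t^e-1)`. -/
theorem statement18 (e : ℕ) [NeZero e] (he : 3 ≤ e) (hp : e ∣ e)
    (ζ : ℂ) (hζ : IsPrimitiveRoot ζ e) (t : ℂ) (ht0 : t ≠ 0)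
    (htr : Transcendental (Algebra.adjoin ℚ {ζ} : Subalgebra ℚ ℂ) t)
    (m : ZMod e → ℕ) (hmn : ∀ k, 2 ≤ m k) (hm : ∀ k, m (k + ((1 : ℕ) : ZMod e)) = m k)
    (P Λ : ℕ → ℕ → ℂ)
    -- P is block lower unitriangular w.r.t. the order and the similarity
    -- classes, with diagonal entries t^{a(z)} :
    (hPtri : ∀ i < dihedralK e + 2, ∀ i' < dihedralK e + 2,
      P i i' ≠ 0 → i = i' ∨ dihedralClass e i' < dihedralClass e i)
    (hPdiag : ∀ i < dihedralK e + 2,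
      P i i = t ^ (if i = 0 then e else if i = dihedralK e + 1 then 0 else 1))
    -- Λ is block diagonal w.r.t. the similarity classes :
    (hΛblock : ∀ i < dihedralK e + 2, ∀ i' < dihedralK e + 2,
      dihedralClass e i ≠ dihedralClass e i' → Λ i i' = 0)
    -- the matrix equation P Λ ᵗP = Ω, with ω_{z,z'} = t^{N*} R_0(χ^z ⊗ χ^{z'} ⊗ conj det_M) :
    (hPΛP : ∀ i < dihedralK e + 2, ∀ i' < dihedralK e + 2,
      (∑ i₁ ∈ Finset.range (dihedralK e + 2), ∑ i₂ ∈ Finset.range (dihedralK e + 2),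
        P i i₁ * Λ i₁ i₂ * P i' i₂) =
      t ^ Nstar e e 2 hp ζ *
        Rq e e 1 2 hp ζ t 0 (fun w =>
          charExt e 2 1 m hm ζ (dihedralIdx e i).1 (dihedralIdx e i).2 w *
            charExt e 2 1 m hm ζ (dihedralIdx e i').1 (dihedralIdx e i').2 w *
            starRingEnd ℂ (refMat e 2 ζ w).det)) :
    -- the first column (the fake degrees): ᵗP_{21} and p_{31}
    (∀ i, 1 ≤ i → i ≤ dihedralK e →
      P i 0 = if Even e ∧ (i = e / 2 ∨ i = e / 2 + 1) then t ^ (e / 2)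
        else t ^ i + t ^ (e - i))
    ∧ (P (dihedralK e + 1) 0 = 1)
    -- P_{32} = (1, 0, …, 0)
    ∧ (P (dihedralK e + 1) 1 = 1)
    ∧ (∀ i, 2 ≤ i → i ≤ dihedralK e → P (dihedralK e + 1) i = 0)
    -- the stated part of Λ
    ∧ (Λ 0 0 = 1)
    ∧ (∀ i, 1 ≤ i → i ≤ dihedralK e → Λ 1 i = t⁻¹ * (t ^ e - 1) * P i 0)
    ∧ (Λ (dihedralK e + 1) (dihedralK e + 1) = t ^ (e - 2) * (t ^ 2 - 1) * (t ^ e - 1)) := by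
  exact statement18_general e he hp ζ hζ t ht0 (pow_ne_one_of_transcendental htr (by omega))
    (pow_ne_one_of_transcendental htr two_pos) m hmn hm P Λ hPtri hPdiag hΛblock hPΛP

end GreenII
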